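/- arXiv:2103.05415 — 5 statements merged into one kernel-verified Lean document; each statement's English description precedes it below -/
import Mathlib

section
/- Let a ∈ ℕ and for each b ∈ [a] let (s_b, k_b, M_b, (∼_{b,n})_{n∈ℕ}) be a model functor, with underlying sets F_{b,n} and maps F_b(π). For each n ∈ ℕ let ⪯_n be a reflexive and transitive relation on the disjoint union F_n := ⊔_{b∈[a]} F_{b,n} satisfying: (C1) if x ∈ F_{b,n}, y ∈ F_{b',n} and x ⪯_n y, then b ≤ b'; (C2) for x, y ∈ F_{b,n}: x ⪯_n y if and only if x ∼_{b,n} y; (C3) for every injection π : [m] → [n] and all x = (σ,α) ∈ F_{b,n}, y = (σ',α') ∈ F_{b',n} with im(σ) ∪ im(σ') ⊆ im(π): x ⪯_n y implies F_b(π)(x) ⪯_m F_{b'}(π)(y). Let ≈_n be the equivalence relation x ≈_n y iff x ⪯_n y and y ⪯_n x, and let C(n) be the set of ≈_n-classes that are maximal for the partial order induced by ⪯_n on F_n/≈_n; the Sym([n])-action on each F_{b,n} preserves ⪯_n and hence acts on C(n). Then the number of Sym([n])-orbits on C(n) is a quasipolynomial in n for all n ≫ 0. -/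
/-- A function `f : ℤ → ℚ` is a quasipolynomial if there are an integer `N ≥ 1` and
polynomials `p i ∈ ℚ[t]` such that `f n = p (n mod N) (n)` for all `n`. -/
def IsQuasiPolynomial (f : ℤ → ℚ) : Prop :=
  ∃ N : ℕ, 0 < N ∧ ∃ p : ZMod N → Polynomial ℚ,
    ∀ n : ℤ, f n = (p (n : ZMod N)).eval (n : ℚ)

/-- A quantity `a : ℕ → ℕ` is a quasipolynomial in `n` for all `n ≫ 0`. -/
def QuasiPolynomialCount (a : ℕ → ℕ) : Prop :=
  ∃ f : ℤ → ℚ, IsQuasiPolynomial f ∧ ∃ n₀ : ℕ, ∀ n : ℕ, n₀ ≤ n → (a n : ℚ) = f n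

/-- A pair `(σ, α)` consisting of an injection `σ : [s] → [n]` together with a word
`α : [n] ∖ im(σ) → [k]`. -/
structure MPair (s k n : ℕ) where
  σ : Fin s → Fin n
  inj : Function.Injective σ
  α : {j : Fin n // j ∉ Set.range σ} → Fin k

/-- The count vector of a pair: the `l`-th entry records how often the letter `l` occurs
in the word `α`. -/
noncomputable def MPair.countVec {s k n : ℕ} (p : MPair s k n) : Fin k → ℕ :=
  fun l => Nat.card {j : {j : Fin n // j ∉ Set.range p.σ} // p.α j = l}

/-- The set `F_n` of pairs whose count vector lies in `M`. -/
def FPair (s k : ℕ) (M : Set (Fin k → ℕ)) (n : ℕ) : Type :=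
  {p : MPair s k n // p.countVec ∈ M}

/-- Restriction of a pair along an injection `π : [m] → [n]` whose image contains the
image of `σ`: this underlies the map `F(π)` of the model functor. -/
noncomputable def MPair.restrict {s k m n : ℕ} (π : Fin m → Fin n)
    (hπ : Function.Injective π) (p : MPair s k n)
    (hsub : Set.range p.σ ⊆ Set.range π) : MPair s k m where
  σ := fun i => (hsub (Set.mem_range_self i)).choose
  inj := by
    intro i i' hii
    apply p.inj
    have h1 := (hsub (Set.mem_range_self i)).choose_spec
    have h2 := (hsub (Set.mem_range_self i')).choose_spec
    rw [← h1, ← h2]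
    exact congrArg π hii
  α := fun j => p.α ⟨π j.1, by
    rintro ⟨i, hi⟩
    exact j.2 ⟨i, hπ ((hsub (Set.mem_range_self i)).choose_spec.trans hi)⟩⟩

/-- The count vector can only decrease under restriction. -/
theorem MPair.countVec_restrict_le {s k m n : ℕ} (π : Fin m → Fin n)
    (hπ : Function.Injective π) (p : MPair s k n)
    (hsub : Set.range p.σ ⊆ Set.range π) (l : Fin k) :
    (p.restrict π hπ hsub).countVec l ≤ p.countVec l := by
  classical
  apply Nat.card_le_card_of_injective
    (fun j => (⟨⟨π j.1.1, by
        rintro ⟨i, hi⟩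
        exact j.1.2 ⟨i, hπ ((hsub (Set.mem_range_self i)).choose_spec.trans hi)⟩⟩,
      j.2⟩ : {j : {j : Fin n // j ∉ Set.range p.σ} // p.α j = l}))
  intro a b hab
  have hval : π a.1.1 = π b.1.1 := congrArg (fun x => x.1.1) hab
  exact Subtype.ext (Subtype.ext (hπ hval))

/-- Restriction, as a map `F(π)` on the sets `F_n` of the model functor; this uses
downward closedness of `M`. -/
noncomputable def FPair.restrict {s k m n : ℕ} {M : Set (Fin k → ℕ)}
    (hM : ∀ β ∈ M, ∀ β' : Fin k → ℕ, (∀ l, β' l ≤ β l) → β' ∈ M)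
    (π : Fin m → Fin n) (hπ : Function.Injective π) (p : FPair s k M n)
    (hsub : Set.range p.1.σ ⊆ Set.range π) : FPair s k M m :=
  ⟨p.1.restrict π hπ hsub, hM _ p.2 _ (fun l => MPair.countVec_restrict_le π hπ p.1 hsub l)⟩


namespace QPC

open Polynomial Filter

/-- left shift of sequences -/
def SH : Module.End ℚ (ℕ → ℚ) := LinearMap.funLeft ℚ ℚ (fun n => n + 1)

theorem SH_apply (f : ℕ → ℚ) (n : ℕ) : SH f n = f (n + 1) := rfl

theorem SH_pow_apply (w : ℕ) (f : ℕ → ℚ) (n : ℕ) : (SH ^ w) f n = f (n + w) := by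
  induction w generalizing f n with
  | zero => simp
  | succ w ih => rw [pow_succ, Module.End.mul_apply, ih, SH_apply]; rfl

def EZ (f : ℕ → ℚ) : Prop := ∀ᶠ n in atTop, f n = 0

theorem EZ.add {f g : ℕ → ℚ} (hf : EZ f) (hg : EZ g) : EZ (f + g) := by
  filter_upwards [hf, hg] with n h1 h2; simp [h1, h2]

theorem EZ.smul {f : ℕ → ℚ} (c : ℚ) (hf : EZ f) : EZ (c • f) := by
  filter_upwards [hf] with n h1; simp [h1]

theorem EZ.pow {f : ℕ → ℚ} (w : ℕ) (hf : EZ f) : EZ ((SH ^ w) f) := by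
  obtain ⟨n0, h⟩ := eventually_atTop.1 hf
  refine eventually_atTop.2 ⟨n0, fun n hn => ?_⟩
  rw [SH_pow_apply]; exact h _ (by omega)

theorem EZ.aeval {f : ℕ → ℚ} (hf : EZ f) (p : ℚ[X]) : EZ (Polynomial.aeval SH p f) := by
  induction p using Polynomial.induction_on' with
  | add p q hp hq => simpa using hp.add hq
  | monomial n c =>
    rw [aeval_monomial, Module.End.mul_apply, Module.algebraMap_end_apply]
    exact (hf.pow n).smul c

theorem EZ.dvd {f : ℕ → ℚ} {p q : ℚ[X]} (h : EZ (Polynomial.aeval SH p f)) (hpq : p ∣ q) :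
    EZ (Polynomial.aeval SH q f) := by
  obtain ⟨r, rfl⟩ := hpq
  rw [mul_comm, map_mul, Module.End.mul_apply]
  exact h.aeval r

def EQ (f : ℕ → ℚ) : Prop :=
  ∃ N : ℕ, 0 < N ∧ ∃ d : ℕ, EZ (Polynomial.aeval SH (((X : ℚ[X]) ^ N - 1) ^ d) f)

theorem dvd_aux (N N' d d' : ℕ) (h : N ∣ N') (hd : d ≤ d') :
    ((X : ℚ[X]) ^ N - 1) ^ d ∣ ((X : ℚ[X]) ^ N' - 1) ^ d' := by
  obtain ⟨c, rfl⟩ := h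
  refine (pow_dvd_pow_of_dvd ?_ d).trans (pow_dvd_pow _ hd)
  rw [pow_mul]
  exact sub_one_dvd_pow_sub_one _ _

theorem EZ.eq {f : ℕ → ℚ} (h : EZ f) : EQ f := ⟨1, one_pos, 0, by simpa using h⟩

theorem EQ.add {f g : ℕ → ℚ} (hf : EQ f) (hg : EQ g) : EQ (f + g) := by
  obtain ⟨N, hN, d, h⟩ := hf
  obtain ⟨N', hN', d', h'⟩ := hg
  refine ⟨N * N', Nat.mul_pos hN hN', max d d', ?_⟩
  rw [map_add]
  exact (h.dvd (dvd_aux _ _ _ _ (Dvd.intro _ rfl) (le_max_left _ _))).add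
    (h'.dvd (dvd_aux _ _ _ _ (Dvd.intro_left _ rfl) (le_max_right _ _)))

theorem EQ.smul {f : ℕ → ℚ} (c : ℚ) (hf : EQ f) : EQ (c • f) := by
  obtain ⟨N, hN, d, h⟩ := hf
  refine ⟨N, hN, d, ?_⟩
  rw [map_smul]; exact h.smul c

theorem EQ.sub {f g : ℕ → ℚ} (hf : EQ f) (hg : EQ g) : EQ (f - g) := by
  have := hf.add (hg.smul (-1)); simpa [sub_eq_add_neg] using this

theorem EQ.sum {ι : Type*} (s : Finset ι) (f : ι → ℕ → ℚ) (hf : ∀ i ∈ s, EQ (f i)) :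
    EQ (fun n => ∑ i ∈ s, f i n) := by
  classical
  induction s using Finset.induction_on with
  | empty => exact EZ.eq (by simp [EZ])
  | insert i s hi ih =>
    simp only [Finset.sum_insert hi]
    exact (hf i (by simp)).add (ih fun j hj => hf j (by simp [hj]))

theorem EQ.of_diff {f : ℕ → ℚ} (w : ℕ) (hw : 0 < w) (h : EQ (fun n => f (n + w) - f n)) :
    EQ f := by
  obtain ⟨N, hN, d, h⟩ := h
  refine ⟨w * N, Nat.mul_pos hw hN, d + 1, ?_⟩
  have e : (fun n => f (n + w) - f n) = Polynomial.aeval SH ((X : ℚ[X]) ^ w - 1) f := by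
    ext n
    simp [SH_pow_apply]
  rw [e, ← Module.End.mul_apply, ← map_mul] at h
  refine h.dvd ?_
  rw [pow_succ]
  apply mul_dvd_mul
  · exact dvd_aux _ _ _ _ (Dvd.intro_left _ rfl) le_rfl
  · simpa using dvd_aux w (w * N) 1 1 (Dvd.intro _ rfl) le_rfl

theorem EQ.shift {f : ℕ → ℚ} (w : ℕ) (h : EQ f) : EQ (fun n => f (n + w)) := by
  obtain ⟨N, hN, d, h⟩ := h
  refine ⟨N, hN, d, ?_⟩
  have e : (fun n => f (n + w)) = Polynomial.aeval SH ((X : ℚ[X]) ^ w) f := by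
    ext n
    simp [SH_pow_apply]
  rw [e, ← Module.End.mul_apply, ← map_mul]
  exact h.dvd (Dvd.intro _ rfl)

theorem EQ.count {a : ℕ → ℕ} (h : EQ (fun n => (a n : ℚ))) : QuasiPolynomialCount a := by
  set f : ℕ → ℚ := fun n => (a n : ℚ) with hf
  obtain ⟨N, hN, d, h⟩ := h
  have key : ∀ k, Polynomial.aeval SH (((X : ℚ[X]) ^ N - 1) ^ k) f = (fwdDiff N)^[k] f := by
    intro k
    induction k with
    | zero => simp
    | succ k ih =>
      rw [pow_succ', map_mul, Module.End.mul_apply, ih, Function.iterate_succ_apply']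
      ext n
      simp [SH_pow_apply, fwdDiff]
  obtain ⟨n0, hn0⟩ := eventually_atTop.1 h
  have hz : ∀ k, d ≤ k → ∀ n, n0 ≤ n → (fwdDiff N)^[k] f n = 0 := by
    intro k hk
    obtain ⟨e, rfl⟩ := Nat.exists_eq_add_of_le hk
    clear hk
    induction e with
    | zero =>
      intro n hn
      have := hn0 n hn
      rw [key] at this
      exact this
    | succ e ih =>
      intro n hn
      rw [← add_assoc, Function.iterate_succ_apply', fwdDiff, ih _ (by omega), ih _ hn, sub_zero]
  haveI : NeZero N := ⟨hN.ne'⟩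
  let y : ZMod N → ℕ := fun r => N * n0 + r.val
  let p : ZMod N → ℚ[X] := fun r => ∑ k ∈ Finset.range d,
    C (((fwdDiff N)^[k] f (y r)) / (k.factorial : ℚ)) *
      (descPochhammer ℚ k).comp (C (1 / (N : ℚ)) * (X - C (y r : ℚ)))
  refine ⟨fun n => (p (n : ZMod N)).eval (n : ℚ), ⟨N, hN, p, fun n => rfl⟩, N * n0 + N, ?_⟩
  intro n hn
  have hr : ((n : ℤ) : ZMod N) = (n : ZMod N) := by simp
  have hyn : ∃ q, n = y (n : ZMod N) + q * N := by
    have h1 : (n : ZMod N).val = n % N := ZMod.val_natCast N n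
    have h2 := Nat.div_add_mod n N
    have h3 : n0 ≤ n / N := by
      rw [Nat.le_div_iff_mul_le hN]; nlinarith
    refine ⟨n / N - n0, ?_⟩
    simp only [y, h1]
    obtain ⟨c, hc⟩ := Nat.exists_eq_add_of_le h3
    rw [hc, Nat.add_sub_cancel_left]
    rw [hc] at h2
    nlinarith
  obtain ⟨q, hq⟩ := hyn
  simp only [hr]
  set r := (n : ZMod N) with hrdef
  have hy : n0 ≤ y r := by
    have : n0 ≤ N * n0 := Nat.le_mul_of_pos_left _ hN
    simp only [y]; omega
  have hnew := shift_eq_sum_fwdDiff_iter N f q (y r)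
  have hfn : (a n : ℚ) = f (y r + q • N) := by
    rw [smul_eq_mul, ← hq]
  rw [hfn, hnew]
  have e1 : ∑ k ∈ Finset.range (q + 1), q.choose k • (fwdDiff N)^[k] f (y r) =
      ∑ k ∈ Finset.range (q + 1 + d), q.choose k • (fwdDiff N)^[k] f (y r) := by
    apply Finset.sum_subset
    · intro k; simp; omega
    · intro k _ hk
      rw [Nat.choose_eq_zero_of_lt (by simpa using hk), zero_smul]
  have e2 : ∑ k ∈ Finset.range d, q.choose k • (fwdDiff N)^[k] f (y r) =
      ∑ k ∈ Finset.range (q + 1 + d), q.choose k • (fwdDiff N)^[k] f (y r) := by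
    apply Finset.sum_subset
    · intro k; simp; omega
    · intro k _ hk
      rw [hz k (by simpa using hk) _ hy, smul_zero]
  rw [e1, ← e2, eval_finsetSum]
  apply Finset.sum_congr rfl
  intro k _
  have hq' : (1 / (N : ℚ)) * ((n : ℚ) - (y r : ℚ)) = q := by
    have : (N : ℚ) ≠ 0 := by exact_mod_cast hN.ne'
    rw [hq]; push_cast; field_simp; ring
  simp only [eval_mul, eval_C, eval_comp, eval_sub, eval_X, Int.cast_natCast]
  rw [hq', descPochhammer_eval_eq_descFactorial, Nat.descFactorial_eq_factorial_mul_choose]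
  have : (k.factorial : ℚ) ≠ 0 := by exact_mod_cast k.factorial_ne_zero
  push_cast
  rw [nsmul_eq_mul]
  field_simp

end QPC

namespace QPC

open Polynomial Filter

/-- weighted counting function -/
noncomputable def cnt {M : Type*} (S : Set M) (wt : M → ℕ) (s n : ℕ) : ℕ :=
  {x | x ∈ S ∧ wt x + s = n}.ncard

def FF {M : Type*} (wt : M → ℕ) : Prop := ∀ n, {x | wt x ≤ n}.Finite

theorem FF.fin {M : Type*} {wt : M → ℕ} (h : FF wt) (S : Set M) (s n : ℕ) :
    {x | x ∈ S ∧ wt x + s = n}.Finite :=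
  (h n).subset (by rintro x ⟨_, hx⟩; show wt x ≤ n; omega)

theorem cnt_union {M : Type*} {wt : M → ℕ} (h : FF wt) (A B : Set M) (s n : ℕ) :
    cnt (A ∪ B) wt s n + cnt (A ∩ B) wt s n = cnt A wt s n + cnt B wt s n := by
  unfold cnt
  rw [← Set.ncard_union_add_ncard_inter _ _ (h.fin A s n) (h.fin B s n)]
  congr 2 <;> ext x <;> simp <;> tauto

theorem cnt_empty {M : Type*} {wt : M → ℕ} (s n : ℕ) : cnt (∅ : Set M) wt s n = 0 := by
  simp [cnt]

theorem cnt_union_disj {M : Type*} {wt : M → ℕ} (h : FF wt) (A B : Set M) (hd : A ∩ B = ∅)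
    (s n : ℕ) : cnt (A ∪ B) wt s n = cnt A wt s n + cnt B wt s n := by
  have := cnt_union h A B s n
  rwa [hd, cnt_empty, add_zero] at this

theorem cnt_image {M M' : Type*} {wt : M → ℕ} {wt' : M' → ℕ} (f : M' → M) (S : Set M')
    (hf : Set.InjOn f S) (t : ℕ) (hw : ∀ x, wt (f x) = wt' x + t) (s n : ℕ) :
    cnt (f '' S) wt s n = cnt S wt' (s + t) n := by
  unfold cnt
  rw [← Set.ncard_image_of_injOn (f := f) (s := {x | x ∈ S ∧ wt' x + (s + t) = n})]
  · congr 1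
    ext x
    constructor
    · rintro ⟨⟨y, hy, rfl⟩, h⟩
      rw [hw] at h
      exact ⟨y, ⟨hy, by omega⟩, rfl⟩
    · rintro ⟨y, ⟨hy, h⟩, rfl⟩
      refine ⟨⟨y, hy, rfl⟩, ?_⟩
      rw [hw]; omega
  · exact hf.mono (fun x hx => hx.1)

theorem wf_lower {α : Type*} [Preorder α] [WellQuasiOrderedLE α] :
    WellFounded (fun A B : LowerSet α => A < B) := by
  rw [RelEmbedding.wellFounded_iff_isEmpty]
  refine ⟨fun f => ?_⟩
  have hlt : ∀ i j : ℕ, i < j → f j < f i := fun i j hij => f.map_rel_iff.2 hij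
  have : ∀ n, ∃ x, x ∈ f n ∧ x ∉ f (n + 1) := by
    intro n
    have := hlt n (n + 1) (Nat.lt_succ_self n)
    by_contra hcon
    push Not at hcon
    exact (lt_irrefl _ (lt_of_lt_of_le this (fun x hx => hcon x hx)))
  choose x hx hx' using this
  obtain ⟨i, j, hij, hle⟩ := wellQuasiOrdered_le (α := α) x
  apply hx' i
  have : f j ≤ f (i + 1) := by
    rcases Nat.lt_or_eq_of_le (Nat.succ_le_of_lt hij) with h | h
    · exact (hlt _ _ h).le
    · rw [← h]
  exact (f (i + 1)).lower hle (this (hx j))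

def wsum {m : ℕ} (w : Fin m → ℕ) (c : Fin m → ℕ) : ℕ := ∑ i, w i * c i

theorem wsum_FF {m : ℕ} (w : Fin m → ℕ) (hw : ∀ i, 0 < w i) : FF (wsum w) := by
  intro n
  refine (Set.finite_Iic (fun _ : Fin m => n)).subset ?_
  intro c hc i
  have h1 : w i * c i ≤ wsum w c := by
    unfold wsum
    exact Finset.single_le_sum (f := fun i => w i * c i) (fun _ _ => Nat.zero_le _) (Finset.mem_univ i)
  have h2 : wsum w c ≤ n := hc
  have h3 := Nat.le_mul_of_pos_left (c i) (hw i)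
  show c i ≤ n
  omega

theorem lower_EQ (m : ℕ) (w : Fin m → ℕ) (hw : ∀ i, 0 < w i) (D : LowerSet (Fin m → ℕ)) (s : ℕ) :
    EQ (fun n => (cnt (D : Set (Fin m → ℕ)) (wsum w) s n : ℚ)) := by
  induction m generalizing s with
  | zero =>
    refine EZ.eq (eventually_atTop.2 ⟨s + 1, fun n hn => ?_⟩)
    have : {x | x ∈ (D : Set (Fin 0 → ℕ)) ∧ wsum w x + s = n} = ∅ := by
      ext x
      simp only [Set.mem_ofPred_eq, Set.mem_empty_iff_false, iff_false, not_and]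
      intro _ h
      simp [wsum] at h
      omega
    unfold cnt
    simp only [this]
    simp
  | succ m ih =>
    revert s
    refine wf_lower.induction (C := fun D : LowerSet (Fin (m + 1) → ℕ) =>
      ∀ s, EQ (fun n => (cnt (D : Set (Fin (m + 1) → ℕ)) (wsum w) s n : ℚ))) D ?_
    intro D IH s
    let D0 : LowerSet (Fin m → ℕ) := ⟨{c | Fin.cons 0 c ∈ D}, by
      intro c c' hcc hc
      exact D.lower (Fin.cons_le_cons.2 ⟨le_rfl, hcc⟩) hc⟩
    let sh : (Fin (m + 1) → ℕ) → (Fin (m + 1) → ℕ) := fun c => Fin.cons (c 0 + 1) (Fin.tail c)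
    have shle : ∀ c c', c ≤ c' → sh c ≤ sh c' := by
      intro c c' h
      exact Fin.cons_le_cons.2 ⟨Nat.succ_le_succ (h 0), fun i => h i.succ⟩
    let D1 : LowerSet (Fin (m + 1) → ℕ) := ⟨{c | sh c ∈ D}, by
      intro c c' hcc hc
      exact D.lower (shle _ _ hcc) hc⟩
    have hD1 : D1 ≤ D := by
      intro c hc
      refine D.lower ?_ (show sh c ∈ D from hc)
      intro i
      refine Fin.cases ?_ (fun j => ?_) i
      · simp [sh]
      · simp [sh, Fin.tail]
    have hFF := wsum_FF w hw
    have hdec : (D : Set (Fin (m + 1) → ℕ)) =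
        (fun c : Fin m → ℕ => (Fin.cons 0 c : Fin (m + 1) → ℕ)) '' (D0 : Set (Fin m → ℕ)) ∪
          sh '' (D1 : Set (Fin (m + 1) → ℕ)) := by
      ext c
      constructor
      · intro hc
        rcases Nat.eq_zero_or_pos (c 0) with h | h
        · left
          have e : (Fin.cons 0 (Fin.tail c) : Fin (m + 1) → ℕ) = c := by
            rw [← h]; exact Fin.cons_self_tail c
          exact ⟨Fin.tail c, show Fin.cons 0 (Fin.tail c) ∈ D by rw [e]; exact hc, e⟩
        · right
          have e : sh (Fin.cons (c 0 - 1) (Fin.tail c)) = c := by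
            have : c 0 - 1 + 1 = c 0 := by omega
            simp [sh, this]
          exact ⟨_, show sh _ ∈ D by rw [e]; exact hc, e⟩
      · rintro (⟨c', hc', rfl⟩ | ⟨c', hc', rfl⟩)
        · exact hc'
        · exact hc'
    have hdisj : (fun c : Fin m → ℕ => (Fin.cons 0 c : Fin (m + 1) → ℕ)) '' (D0 : Set (Fin m → ℕ)) ∩
          sh '' (D1 : Set (Fin (m + 1) → ℕ)) = ∅ := by
      ext c
      simp only [Set.mem_inter_iff, Set.mem_empty_iff_false, iff_false, not_and]
      rintro ⟨c', _, rfl⟩ ⟨c'', _, h⟩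
      have := congrFun h 0
      simp [sh] at this
    have hinj0 : Function.Injective (fun c : Fin m → ℕ => (Fin.cons 0 c : Fin (m + 1) → ℕ)) :=
      Fin.cons_right_injective (α := fun _ => ℕ) 0
    have hinj1 : Function.Injective sh := by
      intro c c' h
      have := Fin.cons_inj.1 h
      rw [← Fin.cons_self_tail c, ← Fin.cons_self_tail c', this.2]
      congr 1
      omega
    have hcnt : ∀ s n, cnt (D : Set (Fin (m + 1) → ℕ)) (wsum w) s n =
        cnt (D0 : Set (Fin m → ℕ)) (wsum (Fin.tail w)) s n +
          cnt (D1 : Set (Fin (m + 1) → ℕ)) (wsum w) (s + w 0) n := by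
      intro s n
      conv_lhs => rw [hdec]
      rw [cnt_union_disj hFF _ _ hdisj]
      congr 1
      · rw [cnt_image (wt' := wsum (Fin.tail w)) _ _ hinj0.injOn 0, add_zero]
        intro x
        simp [wsum, Fin.sum_univ_succ, Fin.tail]
      · rw [cnt_image (wt' := wsum w) _ _ hinj1.injOn (w 0)]
        intro x
        simp [wsum, Fin.sum_univ_succ, Fin.tail, sh]
        ring
    have h0 : ∀ s, EQ (fun n => (cnt (D0 : Set (Fin m → ℕ)) (wsum (Fin.tail w)) s n : ℚ)) :=
      fun s => ih (Fin.tail w) (fun i => hw _) D0 s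
    by_cases heq : D1 = D
    · apply EQ.of_diff (w 0) (hw 0)
      have := (h0 s).shift (w 0)
      convert this using 2 with n
      have h1 := hcnt s (n + w 0)
      rw [heq] at h1
      have h2 : cnt (D : Set (Fin (m + 1) → ℕ)) (wsum w) (s + w 0) (n + w 0) =
        cnt (D : Set (Fin (m + 1) → ℕ)) (wsum w) s n := by
        unfold cnt
        congr 1
        ext x
        simp only [Set.mem_ofPred_eq]
        constructor <;> rintro ⟨h, h'⟩ <;> exact ⟨h, by omega⟩
      rw [h1, h2]
      push_cast
      ring
    · have := (h0 s).add (IH D1 (lt_of_le_of_ne hD1 heq) (s + w 0))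
      convert this using 2 with n
      simp [hcnt s n]

end QPC

namespace QPC

theorem fg_gen {k : ℕ} (P : AddSubmonoid (Fin k → ℕ)) (hP : P.FG) :
    ∃ (m : ℕ) (f : Fin m → (Fin k → ℕ)), (∀ i, f i ≠ 0) ∧
      ∀ x, x ∈ P ↔ ∃ c : Fin m → ℕ, x = ∑ i, c i • f i := by
  classical
  obtain ⟨t, rfl⟩ := hP
  refine ⟨(t.erase 0).card, fun i => ((t.erase 0).equivFin.symm i).1, ?_, ?_⟩
  · intro i
    exact (Finset.mem_erase.1 ((t.erase 0).equivFin.symm i).2).1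
  · intro x
    rw [← AddSubmonoid.mem_closure_range_iff_of_fintype]
    have : Set.range (fun i => ((t.erase 0).equivFin.symm i).1) = (t : Set (Fin k → ℕ)) \ {0} := by
      ext y
      constructor
      · rintro ⟨i, rfl⟩
        have := Finset.mem_erase.1 ((t.erase 0).equivFin.symm i).2
        exact ⟨this.2, this.1⟩
      · rintro ⟨h1, h2⟩
        have : y ∈ t.erase 0 := Finset.mem_erase.2 ⟨h2, h1⟩
        exact ⟨(t.erase 0).equivFin ⟨y, this⟩, by simp⟩
    rw [this, AddSubmonoid.closure_sdiff_singleton_zero]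

/-- total degree -/
def tot {k : ℕ} (β : Fin k → ℕ) : ℕ := ∑ i, β i

theorem tot_FF (k : ℕ) : FF (tot : (Fin k → ℕ) → ℕ) := by
  have := wsum_FF (fun _ : Fin k => 1) (fun _ => Nat.one_pos)
  have e : (tot : (Fin k → ℕ) → ℕ) = wsum (fun _ : Fin k => 1) := by
    funext c; simp [tot, wsum]
  rw [e]; exact this

theorem tot_add {k : ℕ} (x y : Fin k → ℕ) : tot (x + y) = tot x + tot y := by
  simp [tot, Finset.sum_add_distrib]

def mk {k : ℕ} (P : AddSubmonoid (Fin k → ℕ)) (U : Set (Fin k → ℕ)) : Set (Fin k → ℕ) :=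
  {x | ∃ u ∈ U, ∃ p ∈ P, x = u + p}

theorem mk_EQ {k : ℕ} (P : AddSubmonoid (Fin k → ℕ)) (hP : P.FG) (U : Set (Fin k → ℕ))
    (hU : U.Finite) (s : ℕ) : EQ (fun n => (cnt (mk P U) tot s n : ℚ)) := by
  obtain ⟨m, f, hf0, hf⟩ := fg_gen P hP
  let φ : (Fin m → ℕ) → (Fin k → ℕ) := fun c => ∑ i, c i • f i
  have φadd : ∀ c c', φ (c + c') = φ c + φ c' := by
    intro c c'
    simp only [φ, Pi.add_apply, add_smul, Finset.sum_add_distrib]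
  have hφP : ∀ c, φ c ∈ P := fun c => (hf _).2 ⟨c, rfl⟩
  have hφ' : ∀ p ∈ P, ∃ c, p = φ c := fun p hp => (hf _).1 hp
  let w : Fin m → ℕ := fun i => tot (f i)
  have hw : ∀ i, 0 < w i := by
    intro i
    rw [Nat.pos_iff_ne_zero]
    intro h
    apply hf0 i
    ext j
    have := (Finset.sum_eq_zero_iff.1 h) j (Finset.mem_univ _)
    simpa using this
  have hwt : ∀ c, tot (φ c) = wsum w c := by
    intro c
    simp only [tot, φ, wsum, w, Finset.sum_apply, Pi.smul_apply, smul_eq_mul]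
    rw [Finset.sum_comm]
    refine Finset.sum_congr rfl fun i _ => ?_
    rw [Finset.sum_mul]
    exact Finset.sum_congr rfl fun j _ => mul_comm _ _
  revert s
  induction U, hU using Set.Finite.induction_on with
  | empty =>
    intro s
    refine EZ.eq (Filter.Eventually.of_forall fun n => ?_)
    have : mk P ∅ = ∅ := by ext x; simp [mk]
    simp [this, cnt_empty]
  | @insert u U _ _ ih =>
    intro s
    let D : LowerSet (Fin m → ℕ) := ⟨{c | u + φ c ∉ mk P U ∧
        ∀ c', φ c' = φ c → toLex c ≤ toLex c'}, by
      rintro c d hdc ⟨h1, h2⟩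
      obtain ⟨e, rfl⟩ := exists_add_of_le hdc
      refine ⟨?_, ?_⟩
      · rintro ⟨v, hv, p, hp, h⟩
        exact h1 ⟨v, hv, p + φ e, P.add_mem hp (hφP e), by rw [φadd, ← add_assoc, h, add_assoc]⟩
      · intro c' hc'
        have := h2 (c' + e) (by rw [φadd, φadd, hc'])
        rw [toLex_add, toLex_add] at this
        exact le_of_add_le_add_right this⟩
    have hdec : mk P (insert u U) = mk P U ∪ (fun c => u + φ c) '' (D : Set (Fin m → ℕ)) := by
      ext x
      constructor
      · rintro ⟨v, hv, p, hp, rfl⟩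
        by_cases hx : v + p ∈ mk P U
        · exact Or.inl hx
        · right
          rcases hv with rfl | hv
          · have wf : WellFounded (fun c c' : Lex (Fin m → ℕ) => c < c') := wellFounded_lt
            have hne : ({c : Lex (Fin m → ℕ) | φ (ofLex c) = p}).Nonempty := by
              obtain ⟨c, hc⟩ := hφ' p hp
              exact ⟨toLex c, hc.symm⟩
            have hmin := wf.min_mem _ hne
            refine ⟨ofLex (wf.min _ hne), ⟨?_, ?_⟩, ?_⟩
            · rw [show φ (ofLex (wf.min _ hne)) = p from hmin]; exact hx
            · intro c' hc'
              have : toLex c' ∈ {c : Lex (Fin m → ℕ) | φ (ofLex c) = p} := hc'.trans hmin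
              exact not_lt.1 (wf.not_lt_min _ this)
            · show v + φ (ofLex (wf.min _ hne)) = v + p
              rw [show φ (ofLex (wf.min _ hne)) = p from hmin]
          · exact absurd ⟨v, hv, p, hp, rfl⟩ hx
      · rintro (⟨v, hv, p, hp, rfl⟩ | ⟨c, _, rfl⟩)
        · exact ⟨v, Or.inr hv, p, hp, rfl⟩
        · exact ⟨u, Or.inl rfl, φ c, hφP c, rfl⟩
    have hdisj : mk P U ∩ (fun c => u + φ c) '' (D : Set (Fin m → ℕ)) = ∅ := by
      ext x
      simp only [Set.mem_inter_iff, Set.mem_empty_iff_false, iff_false, not_and]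
      rintro hx ⟨c, hc, rfl⟩
      exact hc.1 hx
    have hinj : Set.InjOn (fun c => u + φ c) (D : Set (Fin m → ℕ)) := by
      intro c hc c' hc' h
      have h : φ c = φ c' := add_left_cancel h
      exact toLex.injective (le_antisymm (hc.2 _ h.symm) (hc'.2 _ h))
    have hcnt : ∀ n, cnt (mk P (insert u U)) tot s n = cnt (mk P U) tot s n +
        cnt (D : Set (Fin m → ℕ)) (wsum w) (s + tot u) n := by
      intro n
      rw [hdec, cnt_union_disj (tot_FF k) _ _ hdisj,
        cnt_image (wt' := wsum w) _ _ hinj (tot u)]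
      intro c
      rw [tot_add, hwt, add_comm]
    have := (ih s).add (lower_EQ m w hw D (s + tot u))
    convert this using 2 with n
    simp [hcnt n]

def LL {k : ℕ} (S : Set (Fin k → ℕ)) : Prop :=
  ∃ P : AddSubmonoid (Fin k → ℕ), P.FG ∧ ∃ U : Set (Fin k → ℕ), U.Finite ∧ S = mk P U

theorem LL.EQ {k : ℕ} {S : Set (Fin k → ℕ)} (h : LL S) (s : ℕ) :
    EQ (fun n => (cnt S tot s n : ℚ)) := by
  obtain ⟨P, hP, U, hU, rfl⟩ := h
  exact mk_EQ P hP U hU s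

theorem LL.inter {k : ℕ} {S T : Set (Fin k → ℕ)} (hS : LL S) (hT : LL T) : LL (S ∩ T) := by
  classical
  obtain ⟨P, hP, U, hU, rfl⟩ := hS
  obtain ⟨Q, hQ, V, hV, rfl⟩ := hT
  obtain ⟨m, f, -, hf⟩ := fg_gen P hP
  obtain ⟨m', g, -, hg⟩ := fg_gen Q hQ
  let φ : (Fin m → ℕ) →+ (Fin k → ℕ) :=
    { toFun := fun c => ∑ i, c i • f i
      map_zero' := by simp
      map_add' := by intro c c'; simp only [Pi.add_apply, add_smul, Finset.sum_add_distrib] }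
  let ψ : (Fin m' → ℕ) →+ (Fin k → ℕ) :=
    { toFun := fun c => ∑ i, c i • g i
      map_zero' := by simp
      map_add' := by intro c c'; simp only [Pi.add_apply, add_smul, Finset.sum_add_distrib] }
  have hφ : ∀ x, x ∈ P ↔ ∃ c, x = φ c := hf
  have hψ : ∀ x, x ∈ Q ↔ ∃ c, x = ψ c := hg
  let A : (Fin m → ℕ) × (Fin m' → ℕ) →+ (Fin k → ℕ) := φ.comp (AddMonoidHom.fst _ _)
  let B : (Fin m → ℕ) × (Fin m' → ℕ) →+ (Fin k → ℕ) := ψ.comp (AddMonoidHom.snd _ _)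
  let E := A.eqLocusM B
  have hE : E.FG := AddSubmonoid.fg_eqLocusM A B
  let sol : (Fin k → ℕ) → (Fin k → ℕ) → Set ((Fin m → ℕ) × (Fin m' → ℕ)) := fun u v =>
    {z | u + A z = v + B z}
  let ms : (Fin k → ℕ) → (Fin k → ℕ) → Set ((Fin m → ℕ) × (Fin m' → ℕ)) := fun u v =>
    {z | Minimal (· ∈ sol u v) z}
  have hms : ∀ u v, (ms u v).Finite := fun u v =>
    WellQuasiOrderedLE.finite_of_isAntichain (setOfPred_minimal_antichain _)
  refine ⟨E.map A, hE.map A, ⋃ u ∈ U, ⋃ v ∈ V, (fun z => u + A z) '' ms u v, ?_, ?_⟩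
  · exact hU.biUnion fun u _ => hV.biUnion fun v _ => (hms u v).image _
  · ext x
    constructor
    · rintro ⟨⟨u, hu, p, hp, rfl⟩, ⟨v, hv, q, hq, h⟩⟩
      obtain ⟨c, rfl⟩ := (hφ _).1 hp
      obtain ⟨d, rfl⟩ := (hψ _).1 hq
      have hz : (c, d) ∈ sol u v := h
      obtain ⟨z, hzle, hz'⟩ := exists_minimal_le_of_wellFoundedLT (· ∈ sol u v) (c, d) hz
      obtain ⟨e, he⟩ := exists_add_of_le hzle
      refine ⟨u + A z, ?_, A e, ⟨e, ?_, rfl⟩, ?_⟩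
      · simp only [Set.mem_iUnion]
        exact ⟨u, hu, v, hv, z, hz', rfl⟩
      · show A e = B e
        have h1 : u + A z = v + B z := hz'.prop
        have h2 : u + A (z + e) = v + B (z + e) := by rw [← he]; exact h
        rw [map_add, map_add, ← add_assoc, ← add_assoc, h1] at h2
        exact add_left_cancel h2
      · have : A (c, d) = φ c := rfl
        rw [add_assoc, ← map_add, ← he]
        rfl
    · rintro ⟨y, hy, p, ⟨e, he, rfl⟩, rfl⟩
      simp only [Set.mem_iUnion] at hy
      obtain ⟨u, hu, v, hv, z, hz, rfl⟩ := hy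
      have h1 : u + A z = v + B z := hz.prop
      have h2 : A e = B e := he
      refine ⟨⟨u, hu, A (z + e), (hφ _).2 ⟨_, rfl⟩, ?_⟩, ⟨v, hv, B (z + e), (hψ _).2 ⟨_, rfl⟩, ?_⟩⟩
      · rw [map_add, add_assoc]
      · show u + A z + A e = _
        rw [map_add, ← add_assoc, h1, h2]

theorem list_EQ {k : ℕ} (l : List (Set (Fin k → ℕ))) (hl : ∀ S ∈ l, LL S) (s : ℕ) :
    EQ (fun n => (cnt (⋃ S ∈ l, S) tot s n : ℚ)) := by
  induction hr : l.length generalizing l with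
  | zero =>
    obtain rfl := List.length_eq_zero_iff.1 hr
    refine EZ.eq (Filter.Eventually.of_forall fun n => ?_)
    simp [cnt_empty]
  | succ r ih =>
    match l, hr with
    | A :: l, hr =>
      have hr : l.length = r := by simpa using hr
      have hA : LL A := hl A (by simp)
      have h1 := ih l (fun S hS => hl S (by simp [hS])) hr
      have h2 := ih (l.map (fun S => A ∩ S)) (by
        intro S hS
        obtain ⟨T, hT, rfl⟩ := List.mem_map.1 hS
        exact hA.inter (hl T (by simp [hT]))) (by simpa using hr)
      have h3 := ((hA.EQ s).add h1).sub h2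
      convert h3 using 2 with n
      have e1 : (⋃ S ∈ A :: l, S) = A ∪ ⋃ S ∈ l, S := by
        ext x; simp
      have e2 : (⋃ S ∈ l.map (fun S => A ∩ S), S) = A ∩ ⋃ S ∈ l, S := by
        ext x; simp
      have := cnt_union (tot_FF k) A (⋃ S ∈ l, S) s n
      rw [e1, e2]
      have h : ((cnt (A ∪ ⋃ S ∈ l, S) tot s n + cnt (A ∩ ⋃ S ∈ l, S) tot s n : ℕ) : ℚ) = _ :=
        congrArg _ this
      push_cast at h
      simp only [Pi.add_apply, Pi.sub_apply]
      linarith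

theorem semilinear_EQ {k : ℕ} {S : Set (Fin k → ℕ)} (hS : IsSemilinearSet S) (s : ℕ) :
    EQ (fun n => (cnt S tot s n : ℚ)) := by
  obtain ⟨F, hF, hlin, rfl⟩ := hS
  have := list_EQ hF.toFinset.toList (by
    intro T hT
    have hT : T ∈ F := by simpa using hT
    obtain ⟨a, P, hP, rfl⟩ := isLinearSet_iff_exists_fg_eq_vadd.1 (hlin T hT)
    refine ⟨P, hP, {a}, Set.finite_singleton a, ?_⟩
    ext x
    simp [mk, Set.mem_vadd_set, eq_comm]) s
  convert this using 4
  ext x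
  simp

end QPC

namespace QPC

open scoped Pointwise

section fc
variable {T T' : Type*} [DecidableEq T] [DecidableEq T']

/-- fibre counts -/
def fc {n : ℕ} (f : Fin n → T) (t : T) : ℕ := (Finset.univ.filter (fun j => f j = t)).card

theorem fc_comp [Fintype T] {n : ℕ} (f : Fin n → T) (g : T → T') (t' : T') :
    fc (fun j => g (f j)) t' = ∑ t, if g t = t' then fc f t else 0 := by
  unfold fc
  rw [Finset.card_eq_sum_card_fiberwise (f := f) (t := Finset.univ) (by intro x _; simp)]
  refine Finset.sum_congr rfl fun t _ => ?_
  split_ifs with h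
  · congr 1
    ext j
    simp only [Finset.mem_filter, Finset.mem_univ, true_and]
    constructor
    · exact fun h => h.2
    · rintro rfl; exact ⟨h, rfl⟩
  · rw [Finset.card_eq_zero]
    ext j
    simp only [Finset.mem_filter, Finset.mem_univ, true_and, Finset.notMem_empty, iff_false, not_and]
    rintro h1 rfl
    exact h h1

theorem fc_sum [Fintype T] {n : ℕ} (f : Fin n → T) : ∑ t, fc f t = n := by
  unfold fc
  rw [← Finset.card_eq_sum_card_fiberwise (f := f) (t := Finset.univ) (by intro x _; simp)]
  simp

theorem fc_sel {m n : ℕ} (f : Fin m → T) (g : Fin n → T) (h : ∀ t, fc f t ≤ fc g t) :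
    ∃ π : Fin m → Fin n, Function.Injective π ∧ ∀ j, g (π j) = f j := by
  classical
  have : ∀ t, Nonempty ({j // f j = t} ↪ {j // g j = t}) := by
    intro t
    apply Function.Embedding.nonempty_of_card_le
    rw [Fintype.card_subtype, Fintype.card_subtype]
    exact h t
  have e := fun t => (this t).some
  refine ⟨fun j => (e (f j) ⟨j, rfl⟩).1, ?_, fun j => (e (f j) ⟨j, rfl⟩).2⟩
  intro j j' hj
  have h1 : f j = f j' := by
    rw [← (e (f j) ⟨j, rfl⟩).2, ← (e (f j') ⟨j', rfl⟩).2]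
    exact congrArg g hj
  have key : ∀ t (hj1 : f j = t) (hj2 : f j' = t), (e t ⟨j, hj1⟩).1 = (e t ⟨j', hj2⟩).1 → j = j' := by
    intro t hj1 hj2 hh
    have := (e t).injective (Subtype.ext hh)
    exact congrArg Subtype.val this
  apply key (f j) rfl h1.symm
  refine hj.trans ?_
  have : ∀ t (ht : f j' = t), (e (f j') ⟨j', rfl⟩).1 = (e t ⟨j', ht⟩).1 := by
    rintro t rfl; rfl
  exact this _ _

theorem fc_exists [Fintype T] (γ : T → ℕ) : ∃ (n : ℕ) (f : Fin n → T), fc f = γ := by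
  classical
  refine ⟨Fintype.card (Σ t, Fin (γ t)), fun j => ((Fintype.equivFin (Σ t, Fin (γ t))).symm j).1, ?_⟩
  funext t
  unfold fc
  rw [← Fintype.card_subtype]
  have e1 : {j // ((Fintype.equivFin (Σ t, Fin (γ t))).symm j).1 = t} ≃ {z : Σ t, Fin (γ t) // z.1 = t} :=
    (Fintype.equivFin (Σ t, Fin (γ t))).symm.subtypeEquiv (fun _ => Iff.rfl)
  rw [Fintype.card_congr (e1.trans (Equiv.sigmaSubtype t))]
  simp

theorem fc_perm {n : ℕ} (f g : Fin n → T) (h : ∀ t, fc f t = fc g t) :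
    ∃ τ : Equiv.Perm (Fin n), ∀ j, g (τ j) = f j := by
  obtain ⟨π, hπ, h'⟩ := fc_sel f g (fun t => (h t).le)
  exact ⟨Equiv.ofBijective π (Finite.injective_iff_bijective.1 hπ), h'⟩

theorem fc_pos {n : ℕ} (f : Fin n → T) (t : T) (h : fc f t ≠ 0) : ∃ j, f j = t := by
  obtain ⟨j, hj⟩ := Finset.card_ne_zero.1 h
  exact ⟨j, by simpa using hj⟩

theorem fc_le {m n : ℕ} (g : Fin n → T) (π : Fin m → Fin n) (hπ : Function.Injective π) (t : T) :
    fc (fun j => g (π j)) t ≤ fc g t := by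
  unfold fc
  refine Finset.card_le_card_of_injOn π ?_ hπ.injOn
  intro j hj
  simpa using hj

end fc

theorem lower_semilinear {ι : Type*} [Finite ι] (D : Set (ι → ℕ)) (hD : IsLowerSet D) :
    IsSemilinearSet D := by
  have h : IsSemilinearSet Dᶜ := by
    have hfin : {z | Minimal (· ∈ Dᶜ) z}.Finite :=
      WellQuasiOrderedLE.finite_of_isAntichain (setOfPred_minimal_antichain _)
    have : Dᶜ = ⋃ z ∈ {z | Minimal (· ∈ Dᶜ) z}, z +ᵥ (Set.univ : Set (ι → ℕ)) := by
      ext x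
      simp only [Set.mem_iUnion]
      constructor
      · intro hx
        obtain ⟨z, hzle, hz'⟩ := exists_minimal_le_of_wellFoundedLT (· ∈ Dᶜ) x hx
        obtain ⟨e, rfl⟩ := exists_add_of_le hzle
        exact ⟨z, hz', e, trivial, rfl⟩
      · rintro ⟨z, hz, e, -, rfl⟩ hx
        exact hz.prop (hD (le_self_add (a := z) (b := e)) hx)
    rw [this]
    exact IsSemilinearSet.biUnion hfin fun z _ => IsSemilinearSet.univ.vadd z
  simpa using h.compl

/-- marginals -/
def marg {T T' : Type*} [Fintype T] [DecidableEq T'] (g : T → T') : (T → ℕ) →+ (T' → ℕ) where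
  toFun γ t' := ∑ t, if g t = t' then γ t else 0
  map_zero' := by ext; simp
  map_add' := by
    intro γ δ
    ext t'
    simp only [Pi.add_apply, ← Finset.sum_add_distrib]
    refine Finset.sum_congr rfl fun t _ => ?_
    split_ifs <;> simp

theorem marg_fc {T T' : Type*} [Fintype T] [DecidableEq T] [DecidableEq T'] (g : T → T') {n : ℕ}
    (f : Fin n → T) : marg g (fc f) = fc (fun j => g (f j)) := by
  funext t'
  rw [fc_comp f g]
  rfl

def inrPart (s k : ℕ) : (Fin s ⊕ Fin k → ℕ) →+ (Fin k → ℕ) where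
  toFun γ l := γ (Sum.inr l)
  map_zero' := rfl
  map_add' _ _ := rfl

theorem rel_semilinear (s k s' k' : ℕ)
    (Rel : ∀ n, (Fin n → Fin s ⊕ Fin k) → (Fin n → Fin s' ⊕ Fin k') → Prop)
    (hval : ∀ n c c', Rel n c c' → ∀ i, fc c (Sum.inl i) = 1)
    (hval' : ∀ n c c', Rel n c c' → ∀ i, fc c' (Sum.inl i) = 1)
    (hres : ∀ m n (π : Fin m → Fin n) c c', Function.Injective π → Rel n c c' →
      (∀ i, ∃ j, c (π j) = Sum.inl i) → (∀ i, ∃ j, c' (π j) = Sum.inl i) →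
      Rel m (fun j => c (π j)) (fun j => c' (π j))) :
    IsSemilinearSet {p : (Fin k → ℕ) × (Fin k' → ℕ) | ∃ n c c', Rel n c c' ∧
      (∀ l, fc c (Sum.inr l) = p.1 l) ∧ (∀ l, fc c' (Sum.inr l) = p.2 l)} := by
  let T := (Fin s ⊕ Fin k) × (Fin s' ⊕ Fin k')
  let W : Set (T → ℕ) := {γ | ∃ n c c', Rel n c c' ∧ fc (fun j => ((c j, c' j) : T)) = γ}
  let m1 : (T → ℕ) →+ (Fin s ⊕ Fin k → ℕ) := marg Prod.fst
  let m2 : (T → ℕ) →+ (Fin s' ⊕ Fin k' → ℕ) := marg Prod.snd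
  have hm1 : ∀ n (f : Fin n → T), m1 (fc f) = fc (fun j => (f j).1) := fun n f => marg_fc _ f
  have hm2 : ∀ n (f : Fin n → T), m2 (fc f) = fc (fun j => (f j).2) := fun n f => marg_fc _ f
  have hW : IsSemilinearSet W := by
    have e : W = (lowerClosure W : Set (T → ℕ)) ∩
        ((⋂ i : Fin s, {γ | 0 + ((Pi.evalAddMonoidHom (fun _ => ℕ) (Sum.inl i : Fin s ⊕ Fin k)).comp m1) γ =
            1 + (0 : (T → ℕ) →+ ℕ) γ}) ∩
          (⋂ i : Fin s', {γ | 0 + ((Pi.evalAddMonoidHom (fun _ => ℕ) (Sum.inl i : Fin s' ⊕ Fin k')).comp m2) γ =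
            1 + (0 : (T → ℕ) →+ ℕ) γ})) := by
      ext γ
      simp only [Set.mem_inter_iff, Set.mem_iInter, Set.mem_ofPred_eq, zero_add, AddMonoidHom.zero_apply,
        add_zero, AddMonoidHom.comp_apply, Pi.evalAddMonoidHom_apply]
      constructor
      · intro hγ
        refine ⟨subset_lowerClosure hγ, ?_⟩
        obtain ⟨n, c, c', hR, rfl⟩ := hγ
        rw [hm1, hm2]
        exact ⟨hval n c c' hR, hval' n c c' hR⟩
      · rintro ⟨⟨δ, ⟨n, c, c', hR, rfl⟩, hle⟩, h1, h2⟩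
        obtain ⟨m, f, rfl⟩ := fc_exists γ
        obtain ⟨π, hπ, hsel⟩ := fc_sel f _ hle
        rw [hm1] at h1
        rw [hm2] at h2
        have a1 : ∀ j, c (π j) = (f j).1 := fun j => congrArg Prod.fst (hsel j)
        have a2 : ∀ j, c' (π j) = (f j).2 := fun j => congrArg Prod.snd (hsel j)
        refine ⟨m, _, _, hres m n π c c' hπ hR ?_ ?_, ?_⟩
        · intro i
          obtain ⟨j, hj⟩ := fc_pos _ _ (by rw [h1 i]; exact one_ne_zero)
          exact ⟨j, by rw [a1, hj]⟩
        · intro i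
          obtain ⟨j, hj⟩ := fc_pos _ _ (by rw [h2 i]; exact one_ne_zero)
          exact ⟨j, by rw [a2, hj]⟩
        · congr 1
          funext j
          exact hsel j
    rw [e]
    refine (lower_semilinear _ (lowerClosure W).lower).inter (IsSemilinearSet.inter ?_ ?_)
    · exact IsSemilinearSet.iInter fun i => isSemilinearSet_setOfPred_eq _ _ _ _
    · exact IsSemilinearSet.iInter fun i => isSemilinearSet_setOfPred_eq _ _ _ _
  have := hW.image (AddMonoidHom.prod ((inrPart s k).comp m1) ((inrPart s' k').comp m2))
  convert this using 1
  ext ⟨p, q⟩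
  constructor
  · rintro ⟨n, c, c', hR, h1, h2⟩
    refine ⟨_, ⟨n, c, c', hR, rfl⟩, ?_⟩
    simp only [AddMonoidHom.prod_apply, AddMonoidHom.comp_apply, hm1, hm2]
    exact Prod.ext (funext h1) (funext h2)
  · rintro ⟨_, ⟨n, c, c', hR, rfl⟩, h⟩
    simp only [AddMonoidHom.prod_apply, AddMonoidHom.comp_apply, hm1, hm2] at h
    exact ⟨n, c, c', hR, fun l => congrFun (congrArg Prod.fst h) l, fun l => congrFun (congrArg Prod.snd h) l⟩

theorem lt_semilinear : IsSemilinearSet {q : ℕ × ℕ | q.1 < q.2} := by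
  have := ((IsSemilinearSet.univ (M := ℕ × ℕ)).image
    (AddMonoidHom.prod (AddMonoidHom.fst ℕ ℕ) (AddMonoidHom.fst ℕ ℕ + AddMonoidHom.snd ℕ ℕ))).vadd (0, 1)
  convert this using 1
  ext ⟨x, y⟩
  constructor
  · intro h
    have h : x < y := h
    refine ⟨_, ⟨(x, y - x - 1), trivial, rfl⟩, ?_⟩
    simp
    omega
  · rintro ⟨_, ⟨⟨u, v⟩, -, rfl⟩, h⟩
    simp at h
    show x < y
    omega

theorem lex_semilinear (k : ℕ) :
    IsSemilinearSet {p : (Fin k → ℕ) × (Fin k → ℕ) | toLex p.2 < toLex p.1} := by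
  let e1 : Fin k → ((Fin k → ℕ) × (Fin k → ℕ) →+ ℕ) := fun i =>
    (Pi.evalAddMonoidHom (fun _ => ℕ) i).comp (AddMonoidHom.fst _ _)
  let e2 : Fin k → ((Fin k → ℕ) × (Fin k → ℕ) →+ ℕ) := fun i =>
    (Pi.evalAddMonoidHom (fun _ => ℕ) i).comp (AddMonoidHom.snd _ _)
  have : {p : (Fin k → ℕ) × (Fin k → ℕ) | toLex p.2 < toLex p.1} =
      ⋃ i : Fin k, ((⋂ j ∈ {j | j < i}, {p | 0 + e2 j p = 0 + e1 j p}) ∩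
        (AddMonoidHom.prod (e2 i) (e1 i)) ⁻¹' {q : ℕ × ℕ | q.1 < q.2}) := by
    ext p
    simp only [Set.mem_iUnion, Set.mem_inter_iff, Set.mem_iInter, Set.mem_ofPred_eq, zero_add,
      Set.mem_preimage]
    exact Iff.rfl
  rw [this]
  refine IsSemilinearSet.iUnion fun i => IsSemilinearSet.inter ?_ ?_
  · exact IsSemilinearSet.biInter (Set.toFinite _) fun j _ => isSemilinearSet_setOfPred_eq _ _ _ _
  · exact lt_semilinear.preimage _

end QPC

namespace QPC

/-- the pair set -/
def RR {a : ℕ} {k : Fin a → ℕ} {X : Fin a → ℕ → Type}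
    (le : ∀ n, (Σ b, X b n) → (Σ b, X b n) → Prop)
    (cv : ∀ b n, X b n → Fin (k b) → ℕ) (b b' : Fin a) : Set ((Fin (k b) → ℕ) × (Fin (k b') → ℕ)) :=
  {p | ∃ n x y, le n ⟨b, x⟩ ⟨b', y⟩ ∧ cv b n x = p.1 ∧ cv b' n y = p.2}

def GG {a : ℕ} {k : Fin a → ℕ} {X : Fin a → ℕ → Type}
    (le : ∀ n, (Σ b, X b n) → (Σ b, X b n) → Prop)
    (cv : ∀ b n, X b n → Fin (k b) → ℕ) (b : Fin a) : Set (Fin (k b) → ℕ) :=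
  (Prod.fst '' RR le cv b b) \
    ((⋃ b' ∈ {b' | b' ≠ b}, Prod.fst '' RR le cv b b') ∪
      Prod.fst '' (RR le cv b b ∩ {p | toLex p.2 < toLex p.1}))

theorem GG_semilinear {a : ℕ} {k : Fin a → ℕ} {X : Fin a → ℕ → Type}
    (le : ∀ n, (Σ b, X b n) → (Σ b, X b n) → Prop)
    (cv : ∀ b n, X b n → Fin (k b) → ℕ)
    (h : ∀ b b', IsSemilinearSet (RR le cv b b')) (b : Fin a) : IsSemilinearSet (GG le cv b) := by
  have hf : ∀ b' (S : Set ((Fin (k b) → ℕ) × (Fin (k b') → ℕ))), IsSemilinearSet S →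
      IsSemilinearSet (Prod.fst '' S) := fun b' S hS => hS.image (AddMonoidHom.fst _ _)
  refine (hf _ _ (h b b)).sdiff (IsSemilinearSet.union ?_ ?_)
  · exact IsSemilinearSet.biUnion (Set.toFinite _) fun b' _ => hf _ _ (h b b')
  · exact hf _ _ ((h b b).inter (lex_semilinear _))

theorem card_quot {a : ℕ} {s k : Fin a → ℕ} {X : Fin a → ℕ → Type}
    (le : ∀ n, (Σ b, X b n) → (Σ b, X b n) → Prop)
    (cv : ∀ b n, X b n → Fin (k b) → ℕ)
    (act : ∀ b n, Equiv.Perm (Fin n) → X b n → X b n)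
    (hrefl : ∀ n x, le n x x)
    (htrans : ∀ n x y z, le n x y → le n y z → le n x z)
    (C1 : ∀ n x y, le n x y → x.1 ≤ y.1)
    (hsymm : ∀ n b (x y : X b n), le n ⟨b, x⟩ ⟨b, y⟩ → le n ⟨b, y⟩ ⟨b, x⟩)
    (hact : ∀ n τ (x y : Σ b, X b n), le n x y → le n ⟨x.1, act x.1 n τ x.2⟩ ⟨y.1, act y.1 n τ y.2⟩)
    (htot : ∀ b n (x : X b n), tot (cv b n x) + s b = n)
    (cv_act : ∀ b n τ (x : X b n), cv b n (act b n τ x) = cv b n x)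
    (cv_eq : ∀ b n (x y : X b n), cv b n x = cv b n y → ∃ τ, act b n τ x = y)
    (act_one : ∀ b n (x : X b n), act b n 1 x = x)
    (act_mul : ∀ b n (x : X b n) τ ρ, act b n τ (act b n ρ x) = act b n (ρ * τ) x) (n : ℕ) :
    Nat.card (Quot (fun (x y : {x : Σ b, X b n // ∀ z, le n x z → le n z x}) =>
      ∃ τ : Equiv.Perm (Fin n), le n ⟨x.1.1, act x.1.1 n τ x.1.2⟩ y.1 ∧
        le n y.1 ⟨x.1.1, act x.1.1 n τ x.1.2⟩)) = ∑ b, cnt (GG le cv b) tot (s b) n := by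
  classical
  set r := (fun (x y : {x : Σ b, X b n // ∀ z, le n x z → le n z x}) =>
      ∃ τ : Equiv.Perm (Fin n), le n ⟨x.1.1, act x.1.1 n τ x.1.2⟩ y.1 ∧
        le n y.1 ⟨x.1.1, act x.1.1 n τ x.1.2⟩) with hr
  have hequiv : Equivalence r := by
    refine ⟨?_, ?_, ?_⟩
    · intro x
      refine ⟨1, ?_⟩
      rw [act_one]
      exact ⟨hrefl _ _, hrefl _ _⟩
    · rintro x y ⟨τ, h1, h2⟩
      refine ⟨τ⁻¹, ?_⟩
      have h1 := hact n τ⁻¹ _ _ h1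
      have h2 := hact n τ⁻¹ _ _ h2
      simp only [act_mul, mul_inv_cancel, act_one] at h1 h2
      exact ⟨h2, h1⟩
    · rintro x y z ⟨τ, h1, h2⟩ ⟨ρ, h3, h4⟩
      refine ⟨τ * ρ, ?_⟩
      have h1 := hact n ρ _ _ h1
      have h2 := hact n ρ _ _ h2
      simp only [act_mul] at h1 h2
      exact ⟨htrans _ _ _ _ h1 h3, htrans _ _ _ _ h4 h2⟩
  -- facts on GG
  have G1 : ∀ b β, β ∈ GG le cv b → tot β + s b = n → ∃ x : X b n, cv b n x = β := by
    rintro b β ⟨⟨⟨p, q⟩, ⟨n', x, y, hle, h1, h2⟩, rfl⟩, -⟩ hn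
    have h := htot b n' x
    have h1 : cv b n' x = p := h1
    rw [h1] at h
    obtain rfl : n' = n := h.symm.trans hn
    exact ⟨x, h1⟩
  have G2 : ∀ b (x : X b n), cv b n x ∈ GG le cv b → ∀ z, le n ⟨b, x⟩ z → z.1 = b := by
    rintro b x ⟨-, h⟩ ⟨b', z⟩ hz
    by_contra hb
    apply h
    left
    simp only [Set.mem_iUnion]
    exact ⟨b', hb, (cv b n x, cv b' n z), ⟨n, x, z, hz, rfl, rfl⟩, rfl⟩
  have G3 : ∀ b (x y : X b n), cv b n x ∈ GG le cv b → le n ⟨b, x⟩ ⟨b, y⟩ →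
      toLex (cv b n x) ≤ toLex (cv b n y) := by
    rintro b x y ⟨-, h⟩ hxy
    by_contra hlt
    apply h
    right
    exact ⟨(cv b n x, cv b n y), ⟨⟨n, x, y, hxy, rfl, rfl⟩, not_le.1 hlt⟩, rfl⟩
  have G2' : ∀ b (x : X b n), cv b n x ∈ GG le cv b → ∀ z, le n ⟨b, x⟩ z → le n z ⟨b, x⟩ := by
    rintro b x hx ⟨b', z⟩ hz
    obtain rfl : b' = b := G2 b x hx _ hz
    exact hsymm _ _ _ _ hz
  choose ch hch using G1
  let Φ : (Σ b, {β // β ∈ GG le cv b ∧ tot β + s b = n}) → Quot r := fun z =>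
    Quot.mk r ⟨⟨z.1, ch z.1 z.2.1 z.2.2.1 z.2.2.2⟩, by
      apply G2'
      rw [hch]
      exact z.2.2.1⟩
  have hbij : Function.Bijective Φ := by
    constructor
    · rintro ⟨b, β, hβ, hn⟩ ⟨b', β', hβ', hn'⟩ h
      have h := (Quot.eqvGen_exact h)
      rw [Equivalence.eqvGen_iff hequiv] at h
      obtain ⟨τ, h1, h2⟩ := h
      dsimp only at h1 h2
      have hc := hch b β hβ hn
      have hc' := hch b' β' hβ' hn'
      revert h1 h2
      generalize ch b β hβ hn = x at hc
      generalize ch b' β' hβ' hn' = y at hc'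
      intro h1 h2
      obtain rfl : b = b' := le_antisymm (C1 _ _ _ h1) (C1 _ _ _ h2)
      have hc1 : cv b n (act b n τ x) = β := by rw [cv_act, hc]
      have a1 := G3 b _ _ (by rw [hc1]; exact hβ) h1
      have a2 := G3 b _ _ (by rw [hc']; exact hβ') h2
      rw [hc1, hc'] at a1 a2
      obtain rfl : β = β' := toLex.injective (le_antisymm a1 a2)
      rfl
    · intro q
      obtain ⟨⟨⟨b, x⟩, hx⟩, rfl⟩ := Quot.exists_rep q
      have wf : WellFounded (fun c c' : Lex (Fin (k b) → ℕ) => c < c') := wellFounded_lt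
      have hne : ({c : Lex (Fin (k b) → ℕ) | ∃ y : X b n, le n ⟨b, x⟩ ⟨b, y⟩ ∧
          toLex (cv b n y) = c}).Nonempty := ⟨_, x, hrefl _ _, rfl⟩
      obtain ⟨y, hxy, hy⟩ := wf.min_mem _ hne
      have hmin : ∀ z : X b n, le n ⟨b, x⟩ ⟨b, z⟩ → toLex (cv b n y) ≤ toLex (cv b n z) := by
        intro z hz
        rw [hy]
        have hmem : toLex (cv b n z) ∈ {c : Lex (Fin (k b) → ℕ) | ∃ y : X b n, le n ⟨b, x⟩ ⟨b, y⟩ ∧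
          toLex (cv b n y) = c} := ⟨z, hz, rfl⟩
        exact not_lt.1 (wf.not_lt_min _ hmem)
      have tr : ∀ b' n' (y' : X b n') (z : X b' n'), cv b n' y' = cv b n y → le n' ⟨b, y'⟩ ⟨b', z⟩ →
          ∃ z' : X b' n, le n ⟨b, x⟩ ⟨b', z'⟩ ∧ cv b' n z' = cv b' n' z := by
        intro b' n' y' z hcv hle
        have t1 := htot b n' y'
        have t2 := htot b n y
        rw [hcv] at t1
        obtain rfl : n' = n := t1.symm.trans t2
        obtain ⟨τ, hτ⟩ := cv_eq b n' y' y hcv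
        have := hact n' τ _ _ hle
        dsimp only at this
        rw [hτ] at this
        exact ⟨act b' n' τ z, htrans _ _ _ _ hxy this, cv_act _ _ _ _⟩
      have hG : cv b n y ∈ GG le cv b := by
        refine ⟨⟨(cv b n y, cv b n y), ⟨n, y, y, hrefl _ _, rfl, rfl⟩, rfl⟩, ?_⟩
        rintro (h | ⟨⟨p, q⟩, ⟨⟨n', y', z, hle, h1, h2⟩, hlt⟩, h3⟩)
        · simp only [Set.mem_iUnion] at h
          obtain ⟨b', hb', ⟨p, q⟩, ⟨n', y', z, hle, h1, h2⟩, h3⟩ := h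
          obtain ⟨z', hz', -⟩ := tr b' n' y' z (h1.trans h3) hle
          exact hb' (le_antisymm (C1 _ _ _ (hx _ hz')) (C1 _ _ _ hz'))
        · obtain ⟨z', hz', hc⟩ := tr b n' y' z (h1.trans h3) hle
          have := hmin z' hz'
          rw [hc, ← show p = cv b n y from h3, show cv b n' z = q from h2] at this
          exact absurd hlt (not_lt.2 this)
      refine ⟨⟨b, cv b n y, hG, htot b n y⟩, ?_⟩
      apply Quot.sound
      obtain ⟨τ, hτ⟩ := cv_eq b n _ y (hch b _ hG (htot b n y))
      refine ⟨τ, ?_⟩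
      dsimp only
      rw [hτ]
      exact ⟨hx _ hxy, hxy⟩
  rw [← Nat.card_congr (Equiv.ofBijective Φ hbij)]
  have hfin : ∀ b, Finite {β // β ∈ GG le cv b ∧ tot β + s b = n} := fun b =>
    ((tot_FF (k b)).fin (GG le cv b) (s b) n).to_subtype
  rw [Nat.card_sigma]
  refine Finset.sum_congr rfl fun b _ => ?_
  exact Nat.card_coe_set_eq _

end QPC

namespace QPC

section col
variable {s k n : ℕ}

open Classical in
noncomputable def col (x : MPair s k n) (j : Fin n) : Fin s ⊕ Fin k :=
  if h : j ∈ Set.range x.σ then Sum.inl h.choose else Sum.inr (x.α ⟨j, h⟩)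

theorem col_inl (x : MPair s k n) (j : Fin n) (i : Fin s) : col x j = Sum.inl i ↔ x.σ i = j := by
  unfold col
  split_ifs with h
  · rw [Sum.inl.injEq]
    constructor
    · rintro rfl; exact h.choose_spec
    · intro hi; exact x.inj (h.choose_spec.trans hi.symm)
  · constructor
    · intro h'; cases h'
    · intro h'; exact absurd ⟨i, h'⟩ h

theorem col_inr (x : MPair s k n) (j : Fin n) (hj : j ∉ Set.range x.σ) :
    col x j = Sum.inr (x.α ⟨j, hj⟩) := by
  unfold col
  rw [dif_neg hj]

theorem col_inr_iff (x : MPair s k n) (j : Fin n) (l : Fin k) :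
    col x j = Sum.inr l ↔ ∃ hj : j ∉ Set.range x.σ, x.α ⟨j, hj⟩ = l := by
  constructor
  · intro h
    have hj : j ∉ Set.range x.σ := by
      rintro ⟨i, hi⟩
      rw [(col_inl x j i).2 hi] at h
      cases h
    rw [col_inr x j hj] at h
    exact ⟨hj, Sum.inr.inj h⟩
  · rintro ⟨hj, rfl⟩
    exact col_inr x j hj

theorem col_injective (x y : MPair s k n) (h : ∀ j, col x j = col y j) : x = y := by
  have hσ : x.σ = y.σ := by
    funext i
    exact ((col_inl y _ i).1 ((h _).symm.trans ((col_inl x _ i).2 rfl))).symm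
  obtain ⟨σ, hi, α⟩ := x
  obtain ⟨σ', hi', α'⟩ := y
  obtain rfl : σ = σ' := hσ
  congr 1
  funext ⟨j, hj⟩
  have := h j
  rw [col_inr _ j hj, col_inr _ j hj] at this
  exact Sum.inr.inj this

theorem col_restrict {m : ℕ} (π : Fin m → Fin n) (hπ : Function.Injective π) (x : MPair s k n)
    (hsub : Set.range x.σ ⊆ Set.range π) (j : Fin m) :
    col (x.restrict π hπ hsub) j = col x (π j) := by
  have hs : ∀ i, π ((x.restrict π hπ hsub).σ i) = x.σ i := fun i =>
    (hsub (Set.mem_range_self i)).choose_spec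
  by_cases h : j ∈ Set.range (x.restrict π hπ hsub).σ
  · obtain ⟨i, hi⟩ := h
    rw [(col_inl _ j i).2 hi, eq_comm, col_inl, ← hi, hs]
  · rw [col_inr _ j h]
    have h' : π j ∉ Set.range x.σ := by
      rintro ⟨i, hi⟩
      exact h ⟨i, hπ ((hs i).trans hi)⟩
    rw [col_inr _ _ h']
    rfl

theorem fc_col_inl (x : MPair s k n) (i : Fin s) : fc (col x) (Sum.inl i) = 1 := by
  unfold fc
  rw [Finset.card_eq_one]
  refine ⟨x.σ i, ?_⟩
  ext j
  simp only [Finset.mem_filter, Finset.mem_univ, true_and, Finset.mem_singleton, col_inl]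
  exact eq_comm

theorem fc_col_inr (x : MPair s k n) (l : Fin k) : fc (col x) (Sum.inr l) = x.countVec l := by
  classical
  unfold fc MPair.countVec
  rw [← Fintype.card_subtype, ← Nat.card_eq_fintype_card]
  refine Nat.card_congr
    { toFun := fun j => ⟨⟨j.1, ((col_inr_iff x j.1 l).1 j.2).1⟩, ((col_inr_iff x j.1 l).1 j.2).2⟩
      invFun := fun j => ⟨j.1.1, (col_inr_iff x j.1.1 l).2 ⟨j.1.2, j.2⟩⟩
      left_inv := fun j => rfl
      right_inv := fun j => rfl }

theorem countVec_tot (x : MPair s k n) : tot x.countVec + s = n := by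
  have := fc_sum (col x)
  rw [Fintype.sum_sum_type] at this
  simp only [fc_col_inl, fc_col_inr] at this
  simp at this
  unfold tot
  omega

theorem perm_of_countVec (x y : MPair s k n) (h : x.countVec = y.countVec) :
    ∃ τ : Equiv.Perm (Fin n), ∀ j, col x (τ j) = col y j := by
  apply fc_perm
  rintro (i | l)
  · rw [fc_col_inl, fc_col_inl]
  · rw [fc_col_inr, fc_col_inr, h]

theorem countVec_perm (x y : MPair s k n) (τ : Equiv.Perm (Fin n)) (h : ∀ j, col x (τ j) = col y j) :
    y.countVec = x.countVec := by
  funext l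
  rw [← fc_col_inr, ← fc_col_inr]
  unfold fc
  refine Finset.card_bij (fun j _ => τ j) ?_ ?_ ?_
  · intro j hj
    simpa [h] using hj
  · intro j _ j' _ hh
    exact τ.injective hh
  · intro j hj
    refine ⟨τ.symm j, ?_, by simp⟩
    simp only [Finset.mem_filter, Finset.mem_univ, true_and] at hj ⊢
    rw [← h]
    simpa using hj

end col

end QPC

/-- Quasipolynomial orbit count for pre-component functors: given model functors
indexed by `b ∈ [a]` and compatible quasi-orders `⪯_n` on the disjoint unions
`F_n = ⊔_b F_{b,n}`, the number of `Sym([n])`-orbits on the set `C(n)` of maximal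
equivalence classes is a quasipolynomial in `n` for all `n ≫ 0`. -/
theorem quasipolynomial_orbit_count_of_pre_component_functor
    (a : ℕ) (s k : Fin a → ℕ) (M : ∀ b : Fin a, Set (Fin (k b) → ℕ))
    (hM : ∀ b : Fin a, ∀ β ∈ M b, ∀ β' : Fin (k b) → ℕ, (∀ l, β' l ≤ β l) → β' ∈ M b)
    (sim : ∀ (b : Fin a) (n : ℕ),
      FPair (s b) (k b) (M b) n → FPair (s b) (k b) (M b) n → Prop)
    (hequiv : ∀ b n, Equivalence (sim b n))
    (ax1 : ∀ (b : Fin a) (m n : ℕ) (π : Fin m → Fin n) (hπ : Function.Injective π)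
      (p p' : FPair (s b) (k b) (M b) n) (hp : Set.range p.1.σ ⊆ Set.range π)
      (hp' : Set.range p'.1.σ ⊆ Set.range π),
      sim b n p p' →
        sim b m (FPair.restrict (hM b) π hπ p hp) (FPair.restrict (hM b) π hπ p' hp'))
    (ax2 : ∀ (b : Fin a) (m n : ℕ) (π : Fin m → Fin n) (hπ : Function.Injective π)
      (p : FPair (s b) (k b) (M b) n) (hp : Set.range p.1.σ ⊆ Set.range π)
      (q : FPair (s b) (k b) (M b) m), sim b m (FPair.restrict (hM b) π hπ p hp) q →
      ∃ (p' : FPair (s b) (k b) (M b) n) (hp' : Set.range p'.1.σ ⊆ Set.range π),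
        sim b n p' p ∧ FPair.restrict (hM b) π hπ p' hp' = q)
    (ax3 : ∀ (b : Fin a) (n : ℕ) (p p' : FPair (s b) (k b) (M b) n), sim b n p p' →
      ∀ (i j : Fin n) (hi : i ∉ Set.range p.1.σ) (hi' : i ∉ Set.range p'.1.σ)
        (hj : j ∉ Set.range p.1.σ) (hj' : j ∉ Set.range p'.1.σ),
        (p.1.α ⟨i, hi⟩ = p.1.α ⟨j, hj⟩ ↔ p'.1.α ⟨i, hi'⟩ = p'.1.α ⟨j, hj'⟩))
    (le : ∀ n : ℕ, (Σ b : Fin a, FPair (s b) (k b) (M b) n) →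
      (Σ b : Fin a, FPair (s b) (k b) (M b) n) → Prop)
    (hrefl : ∀ n x, le n x x)
    (htrans : ∀ n x y z, le n x y → le n y z → le n x z)
    (C1 : ∀ n x y, le n x y → x.1 ≤ y.1)
    (C2 : ∀ (n : ℕ) (b : Fin a) (p q : FPair (s b) (k b) (M b) n),
      le n ⟨b, p⟩ ⟨b, q⟩ ↔ sim b n p q)
    (C3 : ∀ (m n : ℕ) (π : Fin m → Fin n) (hπ : Function.Injective π)
      (x y : Σ b : Fin a, FPair (s b) (k b) (M b) n)
      (hx : Set.range x.2.1.σ ⊆ Set.range π) (hy : Set.range y.2.1.σ ⊆ Set.range π),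
      le n x y →
        le m ⟨x.1, FPair.restrict (hM x.1) π hπ x.2 hx⟩
          ⟨y.1, FPair.restrict (hM y.1) π hπ y.2 hy⟩) :
    QuasiPolynomialCount (fun n =>
      Nat.card (Quot (fun (x y : {x : Σ b : Fin a, FPair (s b) (k b) (M b) n //
          ∀ z, le n x z → le n z x}) =>
        ∃ τ : Equiv.Perm (Fin n),
          le n ⟨x.1.1, FPair.restrict (hM x.1.1) (⇑τ) τ.injective x.1.2
              (by rw [Equiv.range_eq_univ]; exact Set.subset_univ _)⟩ y.1 ∧
          le n y.1 ⟨x.1.1, FPair.restrict (hM x.1.1) (⇑τ) τ.injective x.1.2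
              (by rw [Equiv.range_eq_univ]; exact Set.subset_univ _)⟩))) := by
  classical
  let X : Fin a → ℕ → Type := fun b n => FPair (s b) (k b) (M b) n
  let cv : ∀ b n, X b n → Fin (k b) → ℕ := fun b n x => x.1.countVec
  let act : ∀ b n, Equiv.Perm (Fin n) → X b n → X b n := fun b n τ x =>
    FPair.restrict (hM b) (⇑τ) τ.injective x
      (by rw [Equiv.range_eq_univ]; exact Set.subset_univ _)
  have col_act : ∀ b n τ (x : X b n) j, QPC.col (act b n τ x).1 j = QPC.col x.1 (τ j) :=
    fun b n τ x j => QPC.col_restrict (⇑τ) τ.injective x.1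
      (by rw [Equiv.range_eq_univ]; exact Set.subset_univ _) j
  have hext : ∀ b n (x y : X b n), (∀ j, QPC.col x.1 j = QPC.col y.1 j) → x = y :=
    fun b n x y h => Subtype.ext (QPC.col_injective _ _ h)
  have hmain := QPC.card_quot (s := s) (X := X) le cv act hrefl htrans C1
    (fun n b x y h => (C2 n b y x).2 ((hequiv b n).symm ((C2 n b x y).1 h)))
    (fun n τ x y h => C3 n n τ τ.injective x y
      (by rw [Equiv.range_eq_univ]; exact Set.subset_univ _)
      (by rw [Equiv.range_eq_univ]; exact Set.subset_univ _) h)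
    (fun b n x => QPC.countVec_tot x.1)
    (fun b n τ x => QPC.countVec_perm x.1 _ τ (fun j => (col_act b n τ x j).symm))
    (by
      intro b n x y h
      obtain ⟨τ, hτ⟩ := QPC.perm_of_countVec x.1 y.1 h
      exact ⟨τ, hext b n _ _ fun j => (col_act b n τ x j).trans (hτ j)⟩)
    (by
      intro b n x
      exact hext b n _ _ fun j => col_act b n 1 x j)
    (by
      intro b n x τ ρ
      refine hext b n _ _ fun j => ?_
      rw [col_act, col_act, col_act]
      rfl)
  have hRR : ∀ b b', IsSemilinearSet (QPC.RR le cv b b') := by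
    intro b b'
    have := QPC.rel_semilinear (s b) (k b) (s b') (k b')
      (fun n c c' => ∃ (x : X b n) (y : X b' n), le n ⟨b, x⟩ ⟨b', y⟩ ∧ QPC.col x.1 = c ∧ QPC.col y.1 = c')
      (by
        rintro n _ _ ⟨x, y, h, rfl, rfl⟩ i
        exact QPC.fc_col_inl _ _)
      (by
        rintro n _ _ ⟨x, y, h, rfl, rfl⟩ i
        exact QPC.fc_col_inl _ _)
      (by
        rintro m n π _ _ hπ ⟨x, y, h, rfl, rfl⟩ h1 h2
        have hx : Set.range x.1.σ ⊆ Set.range π := by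
          rintro _ ⟨i, rfl⟩
          obtain ⟨j, hj⟩ := h1 i
          exact ⟨j, ((QPC.col_inl _ _ _).1 hj).symm⟩
        have hy : Set.range y.1.σ ⊆ Set.range π := by
          rintro _ ⟨i, rfl⟩
          obtain ⟨j, hj⟩ := h2 i
          exact ⟨j, ((QPC.col_inl _ _ _).1 hj).symm⟩
        exact ⟨_, _, C3 m n π hπ ⟨b, x⟩ ⟨b', y⟩ hx hy h,
          funext fun j => QPC.col_restrict π hπ x.1 hx j, funext fun j => QPC.col_restrict π hπ y.1 hy j⟩)
    convert this using 1
    ext ⟨p, q⟩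
    constructor
    · rintro ⟨n, x, y, h, h1, h2⟩
      exact ⟨n, _, _, ⟨x, y, h, rfl, rfl⟩, fun l => (QPC.fc_col_inr _ _).trans (congrFun h1 l),
        fun l => (QPC.fc_col_inr _ _).trans (congrFun h2 l)⟩
    · rintro ⟨n, _, _, ⟨x, y, h, rfl, rfl⟩, h1, h2⟩
      exact ⟨n, x, y, h, funext fun l => (QPC.fc_col_inr _ _).symm.trans (h1 l),
        funext fun l => (QPC.fc_col_inr _ _).symm.trans (h2 l)⟩
  apply QPC.EQ.count
  have hEQ := QPC.EQ.sum Finset.univ (fun (b : Fin a) (n : ℕ) => (QPC.cnt (QPC.GG le cv b) QPC.tot (s b) n : ℚ))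
    (fun b _ => QPC.semilinear_EQ (QPC.GG_semilinear le cv hRR b) (s b))
  convert hEQ using 1
  funext n
  have := congrArg (Nat.cast : ℕ → ℚ) (hmain n)
  refine this.trans ?_
  push_cast
  simp
end

section
/- Let d ≥ 1. The cyclic group ℤ/dℤ acts on the set P_n := {β : ℤ/dℤ → ℕ : Σ_{a∈ℤ/dℤ} β(a) = n} by rotation, (e·β)(a) = β(a − e). For e ∈ {0,…,d−1} set f(e) := gcd(d,e) for e ≠ 0 and f(0) := d. Then for every n ∈ ℕ, the number of ℤ/dℤ-orbits on P_n equals (1/d) · Σ_{e=0}^{d−1} c(e,n), where c(e,n) := binom(n/(d/f(e)) + f(e) − 1, f(e) − 1) if (d/f(e)) divides n, and c(e,n) := 0 otherwise. -/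
theorem ocr_card_fun (ι : Type) [Fintype ι] (k : ℕ) (h : 0 < Fintype.card ι) :
    Nat.card {γ : ι → ℕ // ∑ i, γ i = k} =
      (k + Fintype.card ι - 1).choose (Fintype.card ι - 1) := by
  classical
  rw [← Nat.card_congr (Sym.equivNatSumOfFintype ι k), Nat.card_eq_fintype_card,
    Sym.card_sym_eq_choose, ← Nat.choose_symm (by omega)]
  congr 1 <;> omega

theorem ocr_sum (d : ℕ) [NeZero d] (H : AddSubgroup (ZMod d)) [Fintype (ZMod d ⧸ H)]
    (γ : ZMod d ⧸ H → ℕ) :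
    ∑ a : ZMod d, γ (QuotientAddGroup.mk a) = Nat.card H * ∑ q, γ q := by
  classical
  rw [← Finset.sum_fiberwise (s := Finset.univ) (g := fun a : ZMod d => (QuotientAddGroup.mk a : ZMod d ⧸ H)),
    Finset.mul_sum]
  refine Finset.sum_congr rfl fun q _ => ?_
  rw [Finset.sum_congr rfl (g := fun _ => γ q) (by intro x hx; simp at hx; rw [hx])]
  rw [Finset.sum_const, smul_eq_mul]
  congr 1
  obtain ⟨a, rfl⟩ := QuotientAddGroup.mk_surjective q
  have hH : Nat.card H = (H : Set (ZMod d)).toFinset.card :=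
    Nat.card_eq_card_toFinset (H : Set (ZMod d))
  rw [hH]
  symm
  refine Finset.card_bij (fun h _ => a + h) ?_ ?_ ?_
  · intro h hh
    simpa using hh
  · intro h _ h' _ hh
    exact add_left_cancel hh
  · intro b hb
    refine ⟨-a + b, ?_, by simp⟩
    have hb' := (Finset.mem_filter.1 hb).2
    simpa using QuotientAddGroup.eq.1 hb'.symm

theorem ocr_fixed (d : ℕ) [NeZero d] (n : ℕ) (e : ZMod d) :
    Nat.card {β : ZMod d → ℕ // ∑ a, β a = n ∧ ∀ a, β (a - e) = β a} =
    Nat.card {γ : ZMod d ⧸ AddSubgroup.zmultiples e → ℕ //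
      ∑ a : ZMod d, γ (QuotientAddGroup.mk a) = n} := by
  symm
  refine Nat.card_congr (Equiv.ofBijective (fun γ => ⟨fun a => γ.1 (QuotientAddGroup.mk a), γ.2, ?_⟩) ⟨?_, ?_⟩)
  · intro a
    refine congrArg γ.1 ?_
    rw [QuotientAddGroup.eq]
    simp
  · intro γ γ' h
    ext q
    obtain ⟨a, rfl⟩ := QuotientAddGroup.mk_surjective q
    exact congrFun (congrArg Subtype.val h) a
  · rintro ⟨β, h1, h2⟩
    have key : ∀ (k : ℤ) (a : ZMod d), β (a + k • e) = β a := by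
      intro k
      induction k using Int.induction_on with
      | zero => simp
      | succ i ih => 
        intro a
        rw [← h2, ← ih a]; congr 1; rw [add_smul]; simp; ring
      | pred i ih =>
        intro a
        rw [← ih a, ← h2 (a + (-(i : ℤ)) • e)]; congr 1; rw [sub_smul]; simp; ring
    refine ⟨⟨fun q => Quotient.liftOn' q β ?_, ?_⟩, ?_⟩
    · intro a b hab
      rw [QuotientAddGroup.leftRel_apply] at hab
      obtain ⟨k, hk⟩ := AddSubgroup.mem_zmultiples_iff.1 hab
      rw [← key k a, hk]; simp
    · exact h1
    · rfl

theorem ocr_count (d : ℕ) [NeZero d] (n : ℕ) (e : ℕ) :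
    Nat.card {β : ZMod d → ℕ // ∑ a, β a = n ∧ ∀ a, β (a - (e : ZMod d)) = β a} =
      (if (d / Nat.gcd d e) ∣ n
        then (n / (d / Nat.gcd d e) + Nat.gcd d e - 1).choose (Nat.gcd d e - 1)
        else 0) := by
  classical
  have hd : 0 < d := Nat.pos_of_ne_zero (NeZero.ne d)
  have hg : 0 < Nat.gcd d e := Nat.gcd_pos_of_pos_left _ hd
  have hm : 0 < d / Nat.gcd d e := Nat.div_pos (Nat.gcd_le_left _ hd) hg
  haveI : Fintype (ZMod d ⧸ AddSubgroup.zmultiples (e : ZMod d)) := Fintype.ofFinite _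
  have h1 : Nat.card (AddSubgroup.zmultiples (e : ZMod d)) = d / Nat.gcd d e := by
    rw [Nat.card_zmultiples, ZMod.addOrderOf_coe _ hd.ne']
  have h2 : Fintype.card (ZMod d ⧸ AddSubgroup.zmultiples (e : ZMod d)) = Nat.gcd d e := by
    have := AddSubgroup.card_eq_card_quotient_mul_card_addSubgroup (AddSubgroup.zmultiples (e : ZMod d))
    rw [h1, Nat.card_zmod, Nat.card_eq_fintype_card] at this
    have h3 := Nat.mul_div_cancel' (Nat.gcd_dvd_left d e)
    exact Nat.eq_of_mul_eq_mul_right hm (by omega)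
  rw [ocr_fixed]
  simp_rw [ocr_sum, h1]
  split_ifs with h
  · obtain ⟨k, hk⟩ := h
    have hk' : n / (d / Nat.gcd d e) = k := by rw [hk]; exact Nat.mul_div_cancel_left _ hm
    rw [hk', ← h2, ← ocr_card_fun _ _ (by omega), h2]
    refine Nat.card_congr (Equiv.subtypeEquivRight fun γ => ?_)
    constructor
    · intro hh; rw [hk] at hh; exact Nat.eq_of_mul_eq_mul_left hm hh
    · intro hh; rw [hh, ← hk]
  · rw [Nat.card_eq_zero]; left
    exact ⟨fun γ => h ⟨_, γ.2.symm⟩⟩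

theorem ocr_burnside (d : ℕ) [NeZero d] (n : ℕ) :
    ∑ e : ZMod d, Nat.card {β : ZMod d → ℕ // ∑ a, β a = n ∧ ∀ a, β (a - e) = β a} =
    Nat.card (Quot (fun (β γ : {β : ZMod d → ℕ // ∑ a : ZMod d, β a = n}) =>
      ∃ e : ZMod d, (fun a => β.1 (a - e)) = γ.1)) * d := by
  classical
  let X := {β : ZMod d → ℕ // ∑ a : ZMod d, β a = n}
  letI : AddAction (ZMod d) X :=
    { vadd := fun e β => ⟨fun a => β.1 (a - e), by
        exact (Equiv.sum_comp (Equiv.subRight e) β.1).trans β.2⟩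
      zero_vadd := fun β => Subtype.ext (funext fun a => congrArg β.1 (sub_zero a))
      add_vadd := fun e f β => Subtype.ext (funext fun a => congrArg β.1 (by ring)) }
  haveI : Finite X := Finite.of_equiv _ (Sym.equivNatSumOfFintype (ZMod d) n)
  letI : Fintype X := Fintype.ofFinite _
  letI : Fintype (Quotient (AddAction.orbitRel (ZMod d) X)) := Fintype.ofFinite _
  have B := AddAction.sum_card_fixedBy_eq_card_orbits_mul_card_addGroup (ZMod d) X
  rw [ZMod.card] at B
  have hq : Nat.card (Quot (fun (β γ : {β : ZMod d → ℕ // ∑ a : ZMod d, β a = n}) =>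
      ∃ e : ZMod d, (fun a => β.1 (a - e)) = γ.1)) =
      Fintype.card (Quotient (AddAction.orbitRel (ZMod d) X)) := by
    rw [← Nat.card_eq_fintype_card]
    refine Nat.card_congr (Quot.congrRight fun β γ => ?_)
    constructor
    · rintro ⟨e, he⟩
      exact (AddAction.orbitRel (ZMod d) X).symm ⟨e, Subtype.ext he⟩
    · intro h
      obtain ⟨e, he⟩ := (AddAction.orbitRel (ZMod d) X).symm h
      exact ⟨e, congrArg Subtype.val he⟩
  rw [hq]
  refine Eq.trans (Finset.sum_congr rfl fun e _ => ?_) B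
  rw [← Nat.card_eq_fintype_card]
  refine Nat.card_congr ((Equiv.subtypeSubtypeEquivSubtypeInter _ _).symm.trans
    (Equiv.subtypeEquivRight fun β => ?_))
  constructor
  · intro h; exact Subtype.ext (funext h)
  · intro h a; exact congrFun (congrArg Subtype.val h) a



/-- Orbit count for the rotation action of `ℤ/dℤ` on compositions of `n` into `d`
nonnegative parts, via the orbit-counting lemma: with `f(e) = gcd(d,e)` (so `f(0) = d`),
the number of orbits equals `(1/d) · Σ_{e=0}^{d-1} c(e,n)` where
`c(e,n) = binom(n/(d/f(e)) + f(e) - 1, f(e) - 1)` if `(d/f(e)) ∣ n` and `0` otherwise. -/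
theorem orbit_count_cyclic_rotation_compositions
    (d : ℕ) [NeZero d] (n : ℕ) :
    (Nat.card (Quot (fun (β γ : {β : ZMod d → ℕ // ∑ a : ZMod d, β a = n}) =>
      ∃ e : ZMod d, (fun a => β.1 (a - e)) = γ.1)) : ℚ) =
    (1 / (d : ℚ)) * ∑ e ∈ Finset.range d,
      (if (d / Nat.gcd d e) ∣ n
        then ((n / (d / Nat.gcd d e) + Nat.gcd d e - 1).choose (Nat.gcd d e - 1) : ℚ)
        else 0) := by
  have hd : (d : ℚ) ≠ 0 := Nat.cast_ne_zero.2 (NeZero.ne d)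
  have B := ocr_burnside d n
  have hs : ∑ e : ZMod d, Nat.card {β : ZMod d → ℕ // ∑ a, β a = n ∧ ∀ a, β (a - e) = β a} =
      ∑ e ∈ Finset.range d, (if (d / Nat.gcd d e) ∣ n
        then (n / (d / Nat.gcd d e) + Nat.gcd d e - 1).choose (Nat.gcd d e - 1)
        else 0) := by
    symm
    refine Finset.sum_bij (fun e _ => (e : ZMod d)) (fun _ _ => Finset.mem_univ _) ?_ ?_ ?_
    · intro a ha b hb h
      have := congrArg ZMod.val h
      rwa [ZMod.val_cast_of_lt (Finset.mem_range.1 ha),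
        ZMod.val_cast_of_lt (Finset.mem_range.1 hb)] at this
    · intro b _
      exact ⟨b.val, Finset.mem_range.2 (ZMod.val_lt b), ZMod.natCast_zmod_val b⟩
    · intro e _
      exact (ocr_count d n e).symm
  rw [hs] at B
  have B' := congrArg (Nat.cast : ℕ → ℚ) B
  push_cast at B'
  rw [B']
  field_simp
end

section
/- Let F := ℂ(t) be the field of rational functions in one variable over ℂ, let n ≥ 1, and let I_n ⊆ F[x_1,…,x_n] be the ideal generated by the polynomials x_i² − t for i ∈ [n]. For an ordered pair (A,B) of disjoint subsets of [n] with A ∪ B = [n], let P_{A,B} ⊆ F[x_1,…,x_n] be the ideal generated by the polynomials x_i − x_j for (i,j) ∈ (A×A) ∪ (B×B), the polynomials x_i + x_j for (i,j) ∈ A×B, and the polynomial x_1² − t. Then: (a) the minimal prime ideals of F[x_1,…,x_n] over I_n are exactly the ideals P_{A,B}; (b) P_{A,B} = P_{C,D} if and only if {A,B} = {C,D}, so there are exactly 2^{n−1} minimal primes over I_n; and (c) the number of orbits of Sym([n]) (acting on F[x_1,…,x_n] by permuting the variables) on the set of minimal primes over I_n equals ⌊n/2⌋ + 1. -/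
open MvPolynomial

/-- The ideal `P_{A,B}` associated to an ordered pair of subsets `A, B ⊆ [n]`. -/
noncomputable def galoisComponentIdeal (n : ℕ) (hn : 1 ≤ n) (A B : Set (Fin n)) :
    Ideal (MvPolynomial (Fin n) (RatFunc ℂ)) :=
  Ideal.span ({g | ∃ i ∈ A, ∃ j ∈ A, g = X i - X j} ∪
    {g | ∃ i ∈ B, ∃ j ∈ B, g = X i - X j} ∪
    {g | ∃ i ∈ A, ∃ j ∈ B, g = X i + X j} ∪
    {X (⟨0, hn⟩ : Fin n) ^ 2 - C RatFunc.X})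

open Classical in
/-- evaluation map -/
noncomputable def gphi {n : ℕ} {L : Type} [Field L] [Algebra (RatFunc ℂ) L] (s : L)
    (A : Set (Fin n)) : MvPolynomial (Fin n) (RatFunc ℂ) →ₐ[RatFunc ℂ] L :=
  aeval (fun i => if i ∈ A then s else -s)

/-- kernel of evaluation -/
noncomputable def gP {n : ℕ} {L : Type} [Field L] [Algebra (RatFunc ℂ) L] (s : L)
    (A : Set (Fin n)) : Ideal (MvPolynomial (Fin n) (RatFunc ℂ)) := RingHom.ker (gphi s A)

lemma t_not_sq (r : RatFunc ℂ) : r ^ 2 ≠ RatFunc.X := by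
  intro h
  have hr : r ≠ 0 := by
    rintro rfl
    exact RatFunc.X_ne_zero (by simpa using h.symm)
  have := congrArg RatFunc.intDegree h
  rw [pow_two, RatFunc.intDegree_mul hr hr, RatFunc.intDegree_X] at this
  omega

section
variable {n : ℕ} {L : Type} [Field L] [Algebra (RatFunc ℂ) L] {s : L}
  (hs : s ^ 2 = algebraMap (RatFunc ℂ) L RatFunc.X)

lemma gphi_mem {i : Fin n} {A : Set (Fin n)} (h : i ∈ A) : gphi s A (X i) = s := by
  simp [gphi, h]

lemma gphi_nmem {i : Fin n} {A : Set (Fin n)} (h : i ∉ A) : gphi s A (X i) = -s := by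
  simp [gphi, h]

lemma gphi_C {A : Set (Fin n)} (a : RatFunc ℂ) : gphi s A (C a) = algebraMap _ L a := by
  simp [gphi]

lemma mem_gP {A : Set (Fin n)} {f} : f ∈ gP s A ↔ gphi s A f = 0 := Iff.rfl

instance gP_prime (A : Set (Fin n)) : (gP s A).IsPrime := by
  unfold gP; exact RingHom.ker_isPrime _

lemma two_ne : (2 : L) ≠ 0 := by
  have : CharZero (RatFunc ℂ) := charZero_of_injective_algebraMap (algebraMap ℂ _).injective
  have : CharZero L := charZero_of_injective_algebraMap (algebraMap (RatFunc ℂ) L).injective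
  exact two_ne_zero

include hs in
lemma s_ne : s ≠ 0 := by
  rintro rfl
  have h : algebraMap (RatFunc ℂ) L RatFunc.X = 0 := by rw [← hs]; simp
  rw [map_eq_zero] at h
  exact RatFunc.X_ne_zero h

include hs in
lemma ne_neg : s ≠ -s := by
  intro h
  have : 2 * s = 0 := by linear_combination h
  rcases mul_eq_zero.1 this with h | h
  · exact two_ne h
  · exact s_ne hs h

include hs in
lemma gsub_mem {i j : Fin n} {A : Set (Fin n)} : X i - X j ∈ gP s A ↔ (i ∈ A ↔ j ∈ A) := by
  rw [mem_gP, map_sub, sub_eq_zero]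
  by_cases hi : i ∈ A <;> by_cases hj : j ∈ A <;>
    simp [hi, hj, gphi_mem, gphi_nmem, ne_neg hs, (ne_neg hs).symm]

include hs in
lemma add_mem' {i j : Fin n} {A : Set (Fin n)} : X i + X j ∈ gP s A ↔ ¬ (i ∈ A ↔ j ∈ A) := by
  rw [mem_gP, map_add, add_eq_zero_iff_eq_neg]
  by_cases hi : i ∈ A <;> by_cases hj : j ∈ A <;>
    simp [hi, hj, gphi_mem, gphi_nmem, ne_neg hs, (ne_neg hs).symm]

include hs in
lemma sq_mem (i : Fin n) (A : Set (Fin n)) : X i ^ 2 - C RatFunc.X ∈ gP s A := by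
  rw [mem_gP, map_sub, map_pow, gphi_C, ← hs]
  by_cases hi : i ∈ A <;> simp [hi, gphi_mem, gphi_nmem]

include hs in
lemma gP_le {A D : Set (Fin n)} (h : gP s A ≤ gP s D) : D = A ∨ D = Aᶜ := by
  have key : ∀ i j, (i ∈ A ↔ j ∈ A) ↔ (i ∈ D ↔ j ∈ D) := by
    intro i j
    by_cases hij : (i ∈ A ↔ j ∈ A)
    · simpa [hij] using (gsub_mem hs).1 (h ((gsub_mem hs).2 hij))
    · have := (add_mem' hs).1 (h ((add_mem' hs).2 hij))
      tauto
  by_cases h0 : ∃ i, (i ∈ A ↔ i ∈ D)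
  · obtain ⟨i, hi⟩ := h0
    left; ext j
    have := key i j
    tauto
  · right; ext j
    have := not_exists.1 h0 j
    simp only [Set.mem_compl_iff]
    tauto

lemma galois_swap (hn : 1 ≤ n) (A B : Set (Fin n)) :
    galoisComponentIdeal n hn A B ≤ galoisComponentIdeal n hn B A := by
  unfold galoisComponentIdeal
  refine Ideal.span_mono ?_
  rintro g (((h | h) | ⟨i, hi, j, hj, rfl⟩) | h)
  · exact Or.inl (Or.inl (Or.inr h))
  · exact Or.inl (Or.inl (Or.inl h))
  · exact Or.inl (Or.inr ⟨j, hj, i, hi, add_comm _ _⟩)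
  · exact Or.inr h

/-- every polynomial reduces to a linear one -/
lemma reduce (hn : 1 ≤ n) (A : Set (Fin n)) (f : MvPolynomial (Fin n) (RatFunc ℂ)) :
    ∃ a b : RatFunc ℂ, f - (C a + C b * X ⟨0, hn⟩) ∈ galoisComponentIdeal n hn A Aᶜ := by
  set P := galoisComponentIdeal n hn A Aᶜ with hP
  have h0 : X (⟨0, hn⟩ : Fin n) ^ 2 - C RatFunc.X ∈ P := Ideal.subset_span (Or.inr rfl)
  have hX : ∀ i : Fin n, ∃ b : RatFunc ℂ, X i - C b * X ⟨0, hn⟩ ∈ P := by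
    intro i
    by_cases hi : i ∈ A <;> by_cases hz : (⟨0, hn⟩ : Fin n) ∈ A
    · exact ⟨1, Ideal.subset_span (Or.inl (Or.inl (Or.inl ⟨i, hi, _, hz, by simp⟩)))⟩
    · exact ⟨-1, Ideal.subset_span (Or.inl (Or.inr ⟨i, hi, _, hz, by simp⟩))⟩
    · exact ⟨-1, Ideal.subset_span (Or.inl (Or.inr ⟨_, hz, i, hi, by simp [add_comm]⟩))⟩
    · exact ⟨1, Ideal.subset_span (Or.inl (Or.inl (Or.inr ⟨i, hi, _, hz, by simp⟩)))⟩
  induction f using MvPolynomial.induction_on with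
  | C a => exact ⟨a, 0, by simp⟩
  | add p q hp hq =>
    obtain ⟨a, b, h1⟩ := hp
    obtain ⟨c, d, h2⟩ := hq
    refine ⟨a + c, b + d, ?_⟩
    convert P.add_mem h1 h2 using 1
    simp only [map_add]; ring
  | mul_X p i hp =>
    obtain ⟨a, b, h1⟩ := hp
    obtain ⟨c, h2⟩ := hX i
    refine ⟨b * c * RatFunc.X, a * c, ?_⟩
    convert P.add_mem (P.add_mem (P.mul_mem_left (X i) h1)
      (P.mul_mem_left (C a + C b * X ⟨0, hn⟩) h2)) (P.mul_mem_left (C b * C c) h0) using 1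
    simp only [map_mul]; ring

include hs in
lemma galois_eq (hn : 1 ≤ n) (A : Set (Fin n)) :
    galoisComponentIdeal n hn A Aᶜ = gP s A := by
  have hle : galoisComponentIdeal n hn A Aᶜ ≤ gP s A := by
    unfold galoisComponentIdeal
    rw [Ideal.span_le]
    rintro g (((⟨i, hi, j, hj, rfl⟩ | ⟨i, hi, j, hj, rfl⟩) | ⟨i, hi, j, hj, rfl⟩) | rfl)
    · exact (gsub_mem hs).2 (by tauto)
    · exact (gsub_mem hs).2 (by simp at hi hj; tauto)
    · exact (add_mem' hs).2 (by simp at hi hj; tauto)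
    · exact sq_mem hs _ _
  refine le_antisymm hle fun f hf => ?_
  obtain ⟨a, b, h⟩ := reduce hn A f
  have h1 : C a + C b * X ⟨0, hn⟩ ∈ gP s A := by
    simpa using (gP s A).sub_mem hf (hle h)
  have hx : (gphi s A (X ⟨0, hn⟩)) ^ 2 = algebraMap (RatFunc ℂ) L RatFunc.X := by
    have := sq_mem hs (⟨0, hn⟩ : Fin n) A
    rw [mem_gP, map_sub, gphi_C, map_pow] at this
    exact sub_eq_zero.1 this
  rw [mem_gP, map_add, map_mul, gphi_C, gphi_C] at h1
  have hb : b = 0 := by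
    by_contra hb
    apply t_not_sq (a / b)
    apply (algebraMap (RatFunc ℂ) L).injective
    rw [← hx, map_pow, map_div₀]
    have hb' : algebraMap (RatFunc ℂ) L b ≠ 0 := by simpa using hb
    rw [eq_neg_of_add_eq_zero_left h1]
    field_simp
  subst hb
  have ha : a = 0 := by simpa using h1
  subst ha
  simpa using h

include hs in
lemma gP_compl' (hn : 1 ≤ n) (A : Set (Fin n)) : gP s Aᶜ = gP s A := by
  rw [← galois_eq hs hn, ← galois_eq hs hn, compl_compl]
  exact le_antisymm (galois_swap _ _ _) (galois_swap _ _ _)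

include hs in
lemma gP_eq_iff (hn : 1 ≤ n) {A D : Set (Fin n)} : gP s A = gP s D ↔ D = A ∨ D = Aᶜ := by
  constructor
  · intro h; exact gP_le hs h.le
  · rintro (rfl | rfl)
    · rfl
    · exact (gP_compl' hs hn A).symm

include hs in
lemma exists_le (hn : 1 ≤ n) (Q : Ideal (MvPolynomial (Fin n) (RatFunc ℂ))) [Q.IsPrime]
    (hQ : ∀ i, X i ^ 2 - C RatFunc.X ∈ Q) : ∃ A, gP s A ≤ Q := by
  set z : Fin n := ⟨0, hn⟩
  have hor : ∀ i, X i - X z ∈ Q ∨ X i + X z ∈ Q := by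
    intro i
    apply Ideal.IsPrime.mem_or_mem ‹_›
    convert Q.sub_mem (hQ i) (hQ z) using 1
    ring
  refine ⟨{i | X i - X z ∈ Q}, ?_⟩
  have hor' : ∀ i, i ∈ ({i | X i - X z ∈ Q} : Set (Fin n))ᶜ → X i + X z ∈ Q :=
    fun i hi => (hor i).resolve_left hi
  rw [← galois_eq hs hn]
  unfold galoisComponentIdeal
  rw [Ideal.span_le]
  rintro g (((⟨i, hi, j, hj, rfl⟩ | ⟨i, hi, j, hj, rfl⟩) | ⟨i, hi, j, hj, rfl⟩) | rfl)
  · change _ ∈ Q; convert Q.sub_mem hi hj using 1; ring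
  · change _ ∈ Q; convert Q.sub_mem (hor' i hi) (hor' j hj) using 1; ring
  · change _ ∈ Q; convert Q.add_mem hi (hor' j hj) using 1; ring
  · exact hQ _

include hs in
lemma minPrimes (hn : 1 ≤ n) :
    (Ideal.span {g : MvPolynomial (Fin n) (RatFunc ℂ) |
        ∃ i : Fin n, g = X i ^ 2 - C RatFunc.X}).minimalPrimes = Set.range (gP (n := n) s) := by
  have hI : ∀ A, Ideal.span {g : MvPolynomial (Fin n) (RatFunc ℂ) |
        ∃ i : Fin n, g = X i ^ 2 - C RatFunc.X} ≤ gP s A := by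
    intro A
    rw [Ideal.span_le]
    rintro g ⟨i, rfl⟩
    exact sq_mem hs i A
  ext Q
  constructor
  · rintro ⟨⟨hp, hIQ⟩, hmin⟩
    obtain ⟨A, hA⟩ := exists_le hs hn Q (fun i => hIQ (Ideal.subset_span ⟨i, rfl⟩))
    exact ⟨A, le_antisymm hA (hmin ⟨gP_prime A, hI A⟩ hA)⟩
  · rintro ⟨A, rfl⟩
    refine ⟨⟨gP_prime A, hI A⟩, ?_⟩
    rintro Q ⟨hp, hIQ⟩ hle
    obtain ⟨D, hD⟩ := exists_le hs hn Q (fun i => hIQ (Ideal.subset_span ⟨i, rfl⟩))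
    have := (gP_eq_iff hs hn).2 (gP_le hs (hD.trans hle))
    rwa [← this]

lemma map_gP (π : Equiv.Perm (Fin n)) (A : Set (Fin n)) :
    Ideal.map (rename ⇑π : MvPolynomial (Fin n) (RatFunc ℂ) →ₐ[RatFunc ℂ] _) (gP s A)
      = gP s (π '' A) := by
  have hc : ∀ f, gphi s (π '' A) (rename π f) = gphi s A f := by
    intro f
    unfold gphi
    rw [aeval_rename]
    congr 2
    ext i
    have : π i ∈ π '' A ↔ i ∈ A := π.injective.mem_set_image
    simp only [Function.comp_apply]
    by_cases h : i ∈ A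
    · rw [if_pos (this.2 h), if_pos h]
    · rw [if_neg (fun h' => h (this.1 h')), if_neg h]
  apply le_antisymm
  · rw [Ideal.map_le_iff_le_comap]
    intro f hf
    rw [Ideal.mem_comap, mem_gP, hc]
    exact hf
  · intro f hf
    have hf' : f = rename π (rename π.symm f) := by simp [rename_rename]
    rw [hf']
    apply Ideal.mem_map_of_mem
    rw [mem_gP, ← hc, ← hf']
    exact hf

end

lemma card_sub (m : ℕ) {L : Type} [Field L] [Algebra (RatFunc ℂ) L] {s : L}
    (hs : s ^ 2 = algebraMap (RatFunc ℂ) L RatFunc.X) :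
    Nat.card (Set.range (gP (n := m + 1) s)) = 2 ^ m := by
  have : Nat.card (Set (Fin m)) = 2 ^ m := by simp
  rw [← this]
  symm
  apply Nat.card_eq_of_bijective
    (fun A : Set (Fin m) => (⟨gP s (insert 0 (Fin.succ '' A)), ⟨_, rfl⟩⟩ :
      Set.range (gP (n := m + 1) s)))
  have hpre : ∀ A : Set (Fin m), Fin.succ ⁻¹' (insert 0 (Fin.succ '' A)) = A := by
    intro A; ext i; simp
  constructor
  · intro A D h
    rcases (gP_eq_iff hs (by omega)).1 (Subtype.ext_iff.1 h) with h | h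
    · rw [← hpre A, ← h, hpre]
    · have : (0 : Fin (m+1)) ∈ insert 0 (Fin.succ '' D) := Set.mem_insert _ _
      rw [h] at this
      simp at this
  · have key : ∀ A : Set (Fin (m+1)), 0 ∈ A → insert 0 (Fin.succ '' (Fin.succ ⁻¹' A)) = A := by
      intro A h0
      ext i
      refine Fin.cases ?_ (fun i => ?_) i <;> simp [h0]
    rintro ⟨_, A, rfl⟩
    by_cases h0 : 0 ∈ A
    · exact ⟨Fin.succ ⁻¹' A, Subtype.ext (by simp only [key A h0])⟩
    · exact ⟨Fin.succ ⁻¹' Aᶜ, Subtype.ext (by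
        simp only [key Aᶜ h0]; exact gP_compl' hs (by omega) A)⟩

lemma card_orb (n : ℕ) (hn : 1 ≤ n) {L : Type} [Field L] [Algebra (RatFunc ℂ) L] {s : L}
    (hs : s ^ 2 = algebraMap (RatFunc ℂ) L RatFunc.X) :
    Nat.card (Quot (fun (P Q : {P // P ∈ Set.range (gP (n := n) s)}) =>
      ∃ π : Equiv.Perm (Fin n), Ideal.map (rename ⇑π) P.1 = Q.1)) = n / 2 + 1 := by
  set r := (fun (P Q : {P // P ∈ Set.range (gP (n := n) s)}) =>
      ∃ π : Equiv.Perm (Fin n), Ideal.map (rename ⇑π) P.1 = Q.1) with hr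
  let p : Set (Fin n) → {P // P ∈ Set.range (gP (n := n) s)} := fun A => ⟨gP s A, A, rfl⟩
  let c : Set (Fin n) → ℕ := fun A => min A.ncard Aᶜ.ncard
  have hcc : ∀ A, c Aᶜ = c A := by intro A; simp [c, min_comm]
  have hcp : ∀ A D, gP s A = gP s D → c A = c D := by
    intro A D h
    rcases (gP_eq_iff hs hn).1 h with rfl | rfl
    · rfl
    · exact (hcc A).symm
  have hcπ : ∀ (π : Equiv.Perm (Fin n)) A, c (π '' A) = c A := by
    intro π A
    simp only [c]
    rw [← Set.image_compl_eq π.bijective, Set.ncard_image_of_injective _ π.injective,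
      Set.ncard_image_of_injective _ π.injective]
  let inv : {P // P ∈ Set.range (gP (n := n) s)} → ℕ := fun P => c P.2.choose
  have hinv : ∀ A, inv (p A) = c A := fun A => hcp _ _ (p A).2.choose_spec
  have hsurjp : ∀ P, ∃ A, P = p A := by
    rintro ⟨_, A, rfl⟩; exact ⟨A, rfl⟩
  have hlift : ∀ P Q, r P Q → inv P = inv Q := by
    intro P Q ⟨π, h⟩
    obtain ⟨A, rfl⟩ := hsurjp P
    obtain ⟨D, rfl⟩ := hsurjp Q
    rw [hinv, hinv, ← hcπ π]
    apply hcp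
    rw [← map_gP]; exact h
  let Inv : Quot r → ℕ := Quot.lift inv hlift
  let seg : ℕ → Set (Fin n) := fun k => {i | i.1 < k}
  have hseg : ∀ k, k ≤ n → (seg k).ncard = k := by
    intro k hk
    have : seg k = Set.range (Fin.castLE hk) := by
      ext i
      simp only [seg, Set.mem_ofPred_eq, Set.mem_range]
      exact ⟨fun h => ⟨⟨i, h⟩, rfl⟩, by rintro ⟨j, rfl⟩; exact j.2⟩
    rw [this, ← Set.image_univ, Set.ncard_image_of_injective _ (Fin.castLE_injective hk)]
    simp
  have hcard : ∀ A : Set (Fin n), A.ncard + Aᶜ.ncard = n := by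
    intro A; simpa using Set.ncard_add_ncard_compl A
  have : n / 2 + 1 = Nat.card (Fin (n / 2 + 1)) := by simp
  rw [this]
  symm
  apply Nat.card_eq_of_bijective (fun k : Fin (n/2+1) => Quot.mk r (p (seg k)))
  constructor
  · intro k l h
    have h1 : Inv (Quot.mk r (p (seg k))) = Inv (Quot.mk r (p (seg l))) := congrArg Inv h
    have h2 : c (seg k) = c (seg l) := by rw [← hinv, ← hinv]; exact h1
    have e1 := hseg k (by omega)
    have e2 := hseg l (by omega)
    have e3 := hcard (seg k)
    have e4 := hcard (seg l)
    simp only [c] at h2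
    ext
    omega
  · have key : ∀ A : Set (Fin n), A.ncard ≤ n / 2 →
        ∃ k : Fin (n/2+1), Quot.mk r (p (seg k)) = Quot.mk r (p A) := by
      intro A hA
      refine ⟨⟨A.ncard, by omega⟩, Quot.sound ?_⟩
      have hk := hseg A.ncard (by omega)
      classical
      have e : Nonempty (seg A.ncard ≃ A) := by
        rw [← Finite.card_eq]
        exact hk
      obtain ⟨e⟩ := e
      refine ⟨e.extendSubtype, ?_⟩
      change Ideal.map _ (gP s _) = gP s A
      rw [map_gP]
      congr 1
      apply Set.eq_of_subset_of_ncard_le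
      · rintro _ ⟨i, hi, rfl⟩
        exact e.extendSubtype_mem i hi
      · rw [Set.ncard_image_of_injective _ (Equiv.injective _), hk]
      · exact Set.toFinite A
    rintro ⟨P⟩
    obtain ⟨A, rfl⟩ := hsurjp P
    by_cases hA : A.ncard ≤ n / 2
    · exact key A hA
    · obtain ⟨k, hk⟩ := key Aᶜ (by have := hcard A; omega)
      refine ⟨k, hk.trans ?_⟩
      have : p Aᶜ = p A := Subtype.ext (gP_compl' hs hn A)
      rw [this]

/-- Over `F = ℂ(t)`, the ideal `I_n = (x_i² - t : i ∈ [n])` has minimal primes exactly the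
ideals `P_{A,B}` for partitions `[n] = A ⊔ B`; two such coincide iff `{A,B} = {C,D}`, there
are `2^{n-1}` of them, and `Sym([n])` has `⌊n/2⌋ + 1` orbits on them. -/
theorem minimal_primes_of_galois_example (n : ℕ) (hn : 1 ≤ n) :
    ((Ideal.span {g : MvPolynomial (Fin n) (RatFunc ℂ) |
        ∃ i : Fin n, g = X i ^ 2 - C RatFunc.X}).minimalPrimes =
      {P | ∃ A B : Set (Fin n), Disjoint A B ∧ A ∪ B = Set.univ ∧
        P = galoisComponentIdeal n hn A B}) ∧
    (∀ A B C D : Set (Fin n),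
      Disjoint A B → A ∪ B = Set.univ → Disjoint C D → C ∪ D = Set.univ →
      (galoisComponentIdeal n hn A B = galoisComponentIdeal n hn C D ↔
        ((A = C ∧ B = D) ∨ (A = D ∧ B = C)))) ∧
    Nat.card {P : Ideal (MvPolynomial (Fin n) (RatFunc ℂ)) //
        P ∈ (Ideal.span {g : MvPolynomial (Fin n) (RatFunc ℂ) |
          ∃ i : Fin n, g = X i ^ 2 - C RatFunc.X}).minimalPrimes} = 2 ^ (n - 1) ∧
    Nat.card (Quot (fun (P Q : {P : Ideal (MvPolynomial (Fin n) (RatFunc ℂ)) //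
        P ∈ (Ideal.span {g : MvPolynomial (Fin n) (RatFunc ℂ) |
          ∃ i : Fin n, g = X i ^ 2 - C RatFunc.X}).minimalPrimes}) =>
      ∃ π : Equiv.Perm (Fin n), Ideal.map (rename ⇑π) P.1 = Q.1)) = n / 2 + 1 := by
  obtain ⟨s, hs⟩ := IsAlgClosed.exists_pow_nat_eq
    (algebraMap (RatFunc ℂ) (AlgebraicClosure (RatFunc ℂ)) RatFunc.X) (n := 2) (by norm_num)
  have hcompl : ∀ A B : Set (Fin n), Disjoint A B → A ∪ B = Set.univ → B = Aᶜ := by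
    intro A B h1 h2
    exact (IsCompl.compl_eq ⟨h1, codisjoint_iff.2 h2⟩).symm
  rw [minPrimes hs hn]
  refine ⟨?_, ?_, ?_, card_orb n hn hs⟩
  · ext P
    constructor
    · rintro ⟨A, rfl⟩
      exact ⟨A, Aᶜ, disjoint_compl_right, Set.union_compl_self A, (galois_eq hs hn A).symm⟩
    · rintro ⟨A, B, h1, h2, rfl⟩
      obtain rfl := hcompl A B h1 h2
      exact ⟨A, (galois_eq hs hn A).symm⟩
  · intro A B D E h1 h2 h3 h4
    obtain rfl := hcompl A B h1 h2
    obtain rfl := hcompl D E h3 h4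
    rw [galois_eq hs hn, galois_eq hs hn, gP_eq_iff hs hn]
    constructor
    · rintro (rfl | rfl)
      · exact Or.inl ⟨rfl, rfl⟩
      · exact Or.inr ⟨(compl_compl A).symm, rfl⟩
    · rintro (⟨h, -⟩ | ⟨-, h⟩)
      · exact Or.inl h.symm
      · exact Or.inr h.symm
  · obtain ⟨m, rfl⟩ : ∃ m, n = m + 1 := ⟨n - 1, by omega⟩
    exact card_sub m hs
end

section
/- Let K be a field and n ≥ 2. Let R := K[x_e : e ∈ Sym²([n])] be the polynomial ring with one variable x_{{i,j}} for every unordered pair {i,j} with i, j ∈ [n] (allowing i = j), and let I ⊆ R be the ideal generated by all cycle monomials x_{{i_1,i_2}}·x_{{i_2,i_3}}·⋯·x_{{i_k,i_1}} with 3 ≤ k ≤ n and i_1,…,i_k ∈ [n] pairwise distinct. For a tree T with vertex set [n], let P_T ⊆ R be the ideal generated by the variables {x_{{i,j}} : i ≠ j and {i,j} is not an edge of T}. Then T ↦ P_T is a bijection from the set of trees with vertex set [n] to the set of minimal prime ideals of R over I; in particular, the number of minimal primes of R over I equals n^{n−2}. -/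
open MvPolynomial

/-- The ideal generated by all cycle monomials
`x_{{i₁,i₂}} x_{{i₂,i₃}} ⋯ x_{{i_k,i₁}}` for `3 ≤ k ≤ n` and distinct `i₁,…,i_k ∈ [n]`. -/
noncomputable def cycleIdeal (K : Type) [Field K] (n : ℕ) :
    Ideal (MvPolynomial (Sym2 (Fin n)) K) :=
  Ideal.span {g | ∃ k : ℕ, ∃ _h3 : 3 ≤ k, ∃ _hn : k ≤ n, ∃ f : Fin k → Fin n,
    Function.Injective f ∧
    g = ∏ a : Fin k, X (s(f a, f ⟨(a.1 + 1) % k, Nat.mod_lt _ (by omega)⟩))}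

/-- The prime associated to a tree `T` on the vertex set `[n]`: the ideal generated by the
variables `x_{{i,j}}` with `i ≠ j` such that `{i,j}` is not an edge of `T`. -/
noncomputable def treePrime (K : Type) [Field K] (n : ℕ) (T : SimpleGraph (Fin n)) :
    Ideal (MvPolynomial (Sym2 (Fin n)) K) :=
  Ideal.span {g | ∃ i j : Fin n, i ≠ j ∧ ¬ T.Adj i j ∧ g = X s(i, j)}


section Algebra
variable {K : Type} [Field K] {n : ℕ}

theorem span_X_prime {σ : Type} (S : Set σ) :
    (Ideal.span ((X : σ → MvPolynomial σ K) '' S)).IsPrime := by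
  classical
  let φ : MvPolynomial σ K →ₐ[K] MvPolynomial σ K :=
    aeval (fun s => if s ∈ S then 0 else X s)
  have hk : Ideal.span ((X : σ → MvPolynomial σ K) '' S) = RingHom.ker φ.toRingHom := by
    apply le_antisymm
    · rw [Ideal.span_le]
      rintro _ ⟨s, hs, rfl⟩
      simp [φ, hs, RingHom.mem_ker]
    · intro p hp
      have hq : (Ideal.Quotient.mkₐ K (Ideal.span ((X : σ → MvPolynomial σ K) '' S))).comp φ
          = Ideal.Quotient.mkₐ K _ := by
        apply MvPolynomial.algHom_ext
        intro s
        by_cases hs : s ∈ S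
        · simp only [φ, AlgHom.comp_apply, aeval_X, hs, if_true, map_zero]
          symm
          rw [Ideal.Quotient.mkₐ_eq_mk, Ideal.Quotient.eq_zero_iff_mem]
          exact Ideal.subset_span ⟨s, hs, rfl⟩
        · simp [φ, hs]
      have hp' : φ p = 0 := hp
      have := DFunLike.congr_fun hq p
      rw [AlgHom.comp_apply, hp', map_zero, Ideal.Quotient.mkₐ_eq_mk] at this
      exact Ideal.Quotient.eq_zero_iff_mem.1 this.symm
  rw [hk]
  exact RingHom.ker_isPrime _

theorem X_mem_span {σ : Type} (S : Set σ) (s : σ) :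
    (X s : MvPolynomial σ K) ∈ Ideal.span ((X : σ → MvPolynomial σ K) '' S) ↔ s ∈ S := by
  classical
  constructor
  · intro h
    rw [mem_ideal_span_X_image] at h
    obtain ⟨i, hi, h⟩ := h (Finsupp.single s 1) (by simp [support_X])
    rw [Finsupp.single_apply] at h
    split_ifs at h with hh
    · exact hh ▸ hi
    · exact absurd rfl h
  · intro h
    exact Ideal.subset_span ⟨s, h, rfl⟩

theorem treePrime_eq (T : SimpleGraph (Fin n)) :
    treePrime K n T = Ideal.span ((X : _ → MvPolynomial (Sym2 (Fin n)) K) ''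
      {e | ∃ i j : Fin n, i ≠ j ∧ ¬ T.Adj i j ∧ e = s(i, j)}) := by
  unfold treePrime
  congr 1
  ext g
  constructor
  · rintro ⟨i, j, h, h', rfl⟩
    exact ⟨_, ⟨i, j, h, h', rfl⟩, rfl⟩
  · rintro ⟨_, ⟨i, j, h, h', rfl⟩, rfl⟩
    exact ⟨i, j, h, h', rfl⟩

theorem treePrime_prime (T : SimpleGraph (Fin n)) : (treePrime K n T).IsPrime := by
  rw [treePrime_eq]; exact span_X_prime _

theorem X_mem_treePrime (T : SimpleGraph (Fin n)) (i j : Fin n) (hij : i ≠ j) :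
    (X s(i, j) : MvPolynomial (Sym2 (Fin n)) K) ∈ treePrime K n T ↔ ¬ T.Adj i j := by
  rw [treePrime_eq, X_mem_span]
  constructor
  · rintro ⟨a, b, h, h', e⟩
    rcases Sym2.eq_iff.1 e with ⟨rfl, rfl⟩ | ⟨rfl, rfl⟩
    · exact h'
    · exact fun q => h' q.symm
  · intro h
    exact ⟨i, j, hij, h, rfl⟩

theorem treePrime_le_iff (T T' : SimpleGraph (Fin n)) :
    treePrime K n T ≤ treePrime K n T' ↔ T' ≤ T := by
  constructor
  · intro h i j hij
    by_contra hc
    exact (X_mem_treePrime (K := K) T' i j hij.ne).1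
      (h ((X_mem_treePrime (K := K) T i j hij.ne).2 hc)) hij
  · intro h
    conv_lhs => unfold treePrime
    rw [Ideal.span_le]
    rintro _ ⟨i, j, hij, hn, rfl⟩
    exact (X_mem_treePrime T' i j hij).2 fun q => hn (h q)

theorem cyc_adj {k : ℕ} (hk : 3 ≤ k) (u v : Fin k) :
    (SimpleGraph.cycleGraph k).Adj u v ↔
      v = ⟨(u.1 + 1) % k, Nat.mod_lt _ (by omega)⟩ ∨
      u = ⟨(v.1 + 1) % k, Nat.mod_lt _ (by omega)⟩ := by
  obtain ⟨k, rfl⟩ : ∃ m, k = m + 2 := ⟨k - 2, by omega⟩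
  have key : ∀ a b : Fin (k+2), a - b = 1 ↔ a = ⟨(b.1 + 1) % (k+2), Nat.mod_lt _ (by omega)⟩ := by
    intro a b
    rw [sub_eq_iff_eq_add, add_comm (1 : Fin (k+2)) b]
    have : b + 1 = (⟨(b.1 + 1) % (k+2), Nat.mod_lt _ (by omega)⟩ : Fin (k+2)) := by
      ext; simp [Fin.val_add]
    rw [this]
  rw [SimpleGraph.cycleGraph_adj, key, key, or_comm]

theorem acyclic_iff (G : SimpleGraph (Fin n)) :
    G.IsAcyclic ↔ ¬ ∃ k : ℕ, ∃ _h3 : 3 ≤ k, ∃ _hn : k ≤ n, ∃ f : Fin k → Fin n,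
    Function.Injective f ∧ ∀ a, G.Adj (f a) (f ⟨(a.1 + 1) % k, Nat.mod_lt _ (by omega)⟩) := by
  rw [SimpleGraph.isAcyclic_iff_free_cycleGraph]
  constructor
  · rintro h ⟨k, h3, hn, f, hf, hadj⟩
    refine h k h3 ⟨⟨⟨f, ?_⟩, hf⟩⟩
    intro a b hab
    rcases (cyc_adj h3 a b).1 hab with e | e
    · rw [e]; exact hadj a
    · rw [e]; exact (hadj b).symm
  · rintro h k h3 ⟨⟨f, hf⟩⟩
    refine h ⟨k, h3, ?_, f, hf, fun a => f.map_adj ((cyc_adj h3 _ _).2 (Or.inl rfl))⟩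
    simpa using Fintype.card_le_of_injective _ hf

theorem cycleIdeal_le_treePrime (T : SimpleGraph (Fin n)) (hT : T.IsAcyclic) :
    cycleIdeal K n ≤ treePrime K n T := by
  unfold cycleIdeal
  rw [Ideal.span_le]
  rintro _ ⟨k, h3, hn, f, hf, rfl⟩
  have hP := treePrime_prime (K := K) T
  rw [SetLike.mem_coe, hP.prod_mem_iff]
  by_contra hc
  rw [acyclic_iff] at hT
  refine hT ⟨k, h3, hn, f, hf, fun a => ?_⟩
  by_contra hna
  refine hc ⟨a, Finset.mem_univ _, (X_mem_treePrime T _ _ ?_).2 hna⟩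
  refine hf.ne ?_
  intro e
  have e := congrArg Fin.val e
  simp only at e
  have := a.2
  rcases Nat.lt_or_ge (a.1 + 1) k with h | h
  · rw [Nat.mod_eq_of_lt h] at e; omega
  · have : a.1 + 1 = k := by omega
    rw [this, Nat.mod_self] at e; omega

theorem exists_tree_le (hn : 2 ≤ n) (P : Ideal (MvPolynomial (Sym2 (Fin n)) K)) (hP : P.IsPrime)
    (hI : cycleIdeal K n ≤ P) :
    ∃ T : SimpleGraph (Fin n), T.IsTree ∧ treePrime K n T ≤ P := by
  have : Nonempty (Fin n) := ⟨⟨0, by omega⟩⟩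
  let G : SimpleGraph (Fin n) :=
    { Adj := fun i j => i ≠ j ∧ X s(i, j) ∉ P
      symm := ⟨fun i j h => ⟨h.1.symm, by rw [Sym2.eq_swap]; exact h.2⟩⟩
      loopless := ⟨fun i h => h.1 rfl⟩ }
  have hG : G.IsAcyclic := by
    rw [acyclic_iff]
    rintro ⟨k, h3, hn, f, hf, hadj⟩
    have := hI (Ideal.subset_span ⟨k, h3, hn, f, hf, rfl⟩)
    rw [hP.prod_mem_iff] at this
    obtain ⟨a, -, ha⟩ := this
    exact (hadj a).2 ha
  obtain ⟨T, hGT, -, hT⟩ :=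
    SimpleGraph.connected_top.exists_isTree_le_of_le_of_isAcyclic (le_top : G ≤ ⊤) hG
  refine ⟨T, hT, ?_⟩
  unfold treePrime
  rw [Ideal.span_le]
  rintro _ ⟨i, j, hij, hn, rfl⟩
  by_contra hc
  exact hn (hGT ⟨hij, hc⟩)

theorem tree_le_eq {V : Type} {T T' : SimpleGraph V} (hT : T.IsTree) (hT' : T'.IsTree) (h : T ≤ T') :
    T = T' :=
  le_antisymm h ((SimpleGraph.isTree_iff_minimal_connected.1 hT').2 hT.connected h)

theorem part1 (hn : 2 ≤ n) (T : SimpleGraph (Fin n)) (hT : T.IsTree) :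
    treePrime K n T ∈ (cycleIdeal K n).minimalPrimes := by
  refine ⟨⟨treePrime_prime T, cycleIdeal_le_treePrime T hT.isAcyclic⟩, ?_⟩
  rintro Q ⟨hQ, hI⟩ hle
  obtain ⟨T', hT', h'⟩ := exists_tree_le hn Q hQ hI
  have := (treePrime_le_iff _ _).1 (h'.trans hle)
  have := tree_le_eq hT hT' this
  exact this ▸ h'

theorem part2 (T T' : SimpleGraph (Fin n)) (h : treePrime K n T = treePrime K n T') : T = T' :=
  le_antisymm ((treePrime_le_iff (K := K) _ _).1 h.ge) ((treePrime_le_iff (K := K) _ _).1 h.le)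

theorem part3 (hn : 2 ≤ n) (P : Ideal (MvPolynomial (Sym2 (Fin n)) K))
    (hP : P ∈ (cycleIdeal K n).minimalPrimes) :
    ∃ T : SimpleGraph (Fin n), T.IsTree ∧ treePrime K n T = P := by
  obtain ⟨T, hT, h⟩ := exists_tree_le hn P hP.1.1 hP.1.2
  exact ⟨T, hT, le_antisymm h
    (hP.2 ⟨treePrime_prime T, cycleIdeal_le_treePrime T hT.isAcyclic⟩ h)⟩

end Algebra

section Cayley

/-- Acyclic parent functions: forests on `α ⊕ β` with roots `β`. -/
def Acyc {α β : Type} (f : α → α ⊕ β) : Prop := WellFounded (fun b a => f a = Sum.inl b)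

theorem acyc_of_rank {α β : Type} (f : α → α ⊕ β) (h : α → ℕ)
    (H : ∀ a b, f a = Sum.inl b → h b < h a) : Acyc f :=
  Subrelation.wf (fun {b a} e => H a b e) (InvImage.wf h Nat.lt_wfRel.wf)

/-- The set of depth-one vertices. -/
def firstLayer {α β : Type} (f : α → α ⊕ β) : Set α := {a | ∃ b, f a = Sum.inr b}

/-- Glue. -/
noncomputable def glue {α β : Type} (J : Set α) (c : J → β) (g : ↥Jᶜ → ↥Jᶜ ⊕ J) : α → α ⊕ β :=
  open Classical in
  fun a => if h : a ∈ J then Sum.inr (c ⟨a, h⟩) else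
    Sum.inl ((g ⟨a, h⟩).elim Subtype.val Subtype.val)

theorem glue_mem {α β : Type} (J : Set α) (c : J → β) (g : ↥Jᶜ → ↥Jᶜ ⊕ J) (a : J) :
    glue J c g a = Sum.inr (c a) := by simp [glue]

theorem glue_not_mem {α β : Type} (J : Set α) (c : J → β) (g : ↥Jᶜ → ↥Jᶜ ⊕ J) (a : ↥Jᶜ) :
    glue J c g a = Sum.inl ((g a).elim Subtype.val Subtype.val) := by
  have := a.2
  simp only [Set.mem_compl_iff] at this
  simp [glue, this]

theorem firstLayer_glue {α β : Type} (J : Set α) (c : J → β) (g : ↥Jᶜ → ↥Jᶜ ⊕ J) :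
    firstLayer (glue J c g) = J := by
  ext a
  by_cases h : a ∈ J
  · simp [firstLayer, glue, h]
  · simp [firstLayer, glue, h]

theorem acyc_glue {α β : Type} (J : Set α) (c : J → β) (g : ↥Jᶜ → ↥Jᶜ ⊕ J) :
    Acyc (glue J c g) ↔ Acyc g := by
  constructor
  · intro h
    refine Subrelation.wf ?_ (InvImage.wf (Subtype.val : ↥Jᶜ → α) h)
    intro b a e
    change glue J c g a = Sum.inl b.1
    rw [glue_not_mem, e]; rfl
  · intro h
    have h1 : ∀ a ∈ J, Acc (fun b a => glue J c g a = Sum.inl b) a := by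
      intro a ha
      refine ⟨_, fun b e => ?_⟩
      have := glue_mem J c g ⟨a, ha⟩
      simp only at this
      rw [this] at e
      cases e
    have h2 : ∀ a : ↥Jᶜ, Acc (fun b a => glue J c g a = Sum.inl b) a.1 := by
      intro a
      induction a using h.induction with
      | _ a ih =>
        refine ⟨_, fun b e => ?_⟩
        rw [glue_not_mem] at e
        rcases hg : g a with x | x
        · rw [hg] at e
          have : x.1 = b := by simpa using e
          rw [← this]; exact ih x hg
        · rw [hg] at e
          have : x.1 = b := by simpa using e
          rw [← this]; exact h1 _ x.2
    refine ⟨fun a => ?_⟩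
    by_cases ha : a ∈ J
    · exact h1 a ha
    · exact h2 ⟨a, ha⟩

theorem glue_bij {α β : Type} (J : Set α) : Function.Bijective
    (fun p : (J → β) × {g : ↥Jᶜ → ↥Jᶜ ⊕ J // Acyc g} =>
      (⟨glue J p.1 p.2.1, (acyc_glue _ _ _).2 p.2.2, firstLayer_glue _ _ _⟩ :
        {f : α → α ⊕ β // Acyc f ∧ firstLayer f = J})) := by
  constructor
  · rintro ⟨c, g, hg⟩ ⟨c', g', hg'⟩ e
    have e : glue J c g = glue J c' g' := congrArg Subtype.val e
    have e1 : c = c' := by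
      funext a
      have := congrFun e a
      rw [glue_mem, glue_mem] at this
      exact Sum.inr_injective this
    have e2 : g = g' := by
      funext a
      have := congrFun e a
      rw [glue_not_mem, glue_not_mem] at this
      have := Sum.inl_injective this
      rcases h : g a with x | x <;> rcases h' : g' a with y | y <;> rw [h, h'] at this <;>
        simp only [Sum.elim_inl, Sum.elim_inr] at this
      · rw [Subtype.ext this]
      · exact absurd (this ▸ y.2) x.2
      · exact absurd (this ▸ x.2) y.2
      · rw [Subtype.ext this]
    subst e1 e2; rfl
  · rintro ⟨f, hf, rfl⟩
    classical
    have h1 : ∀ a : firstLayer f, ∃ b, f a = Sum.inr b := fun a => a.2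
    choose c hc using h1
    have h2 : ∀ a : ↥(firstLayer f)ᶜ, ∃ x, f a = Sum.inl x := by
      intro a
      rcases h : f a with x | x
      · exact ⟨x, rfl⟩
      · exact absurd ⟨x, h⟩ a.2
    choose d hd using h2
    let g : ↥(firstLayer f)ᶜ → ↥(firstLayer f)ᶜ ⊕ (firstLayer f) := fun a =>
      if h : d a ∈ firstLayer f then Sum.inr ⟨d a, h⟩ else Sum.inl ⟨d a, h⟩
    have hfg : glue (firstLayer f) c g = f := by
      funext a
      by_cases h : a ∈ firstLayer f
      · exact (glue_mem _ c g ⟨a, h⟩).trans (hc ⟨a, h⟩).symm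
      · refine (glue_not_mem _ c g ⟨a, h⟩).trans (Eq.trans ?_ (hd ⟨a, h⟩).symm)
        by_cases h' : d ⟨a, h⟩ ∈ firstLayer f <;> simp [g, h']
    refine ⟨(c, ⟨g, ?_⟩), Subtype.ext hfg⟩
    rw [← acyc_glue _ c g, hfg]; exact hf

/-- Number of acyclic functions. -/
noncomputable def acycCount (α β : Type) : ℕ := Nat.card {f : α → α ⊕ β // Acyc f}

theorem acycCount_rec (α β : Type) [Fintype α] [Fintype β] :
    acycCount α β = ∑ J : Set α, Nat.card β ^ Nat.card J * acycCount ↥Jᶜ J := by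
  classical
  have e : {f : α → α ⊕ β // Acyc f} ≃
      Σ J : Set α, (J → β) × {g : ↥Jᶜ → ↥Jᶜ ⊕ J // Acyc g} :=
    ((Equiv.sigmaFiberEquiv (fun f : {f : α → α ⊕ β // Acyc f} => firstLayer f.1)).symm).trans
      (Equiv.sigmaCongrRight fun J =>
        (Equiv.subtypeSubtypeEquivSubtypeInter _ (fun f => firstLayer f = J)).trans
          (Equiv.ofBijective _ (glue_bij J)).symm)
  rw [acycCount, Nat.card_congr e, Nat.card_sigma]
  refine Finset.sum_congr rfl fun J _ => ?_
  rw [Nat.card_prod, Nat.card_fun, acycCount]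

theorem acycCount_zero (α β : Type) [Nonempty α] [IsEmpty β] : acycCount α β = 0 := by
  unfold acycCount
  rw [Nat.card_eq_zero]
  left
  refine ⟨fun ⟨f, hf⟩ => ?_⟩
  obtain ⟨a⟩ := ‹Nonempty α›
  induction a using hf.induction with
  | _ a ih =>
    rcases h : f a with x | x
    · exact ih x h
    · exact isEmptyElim x

theorem acycCount_empty (α β : Type) [IsEmpty α] : acycCount α β = 1 := by
  unfold acycCount
  rw [Nat.card_eq_one_iff_unique]
  exact ⟨⟨fun f g => Subtype.ext (funext fun a => isEmptyElim a)⟩,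
    ⟨⟨fun a => isEmptyElim a, ⟨fun a => isEmptyElim a⟩⟩⟩⟩

theorem binom_id (m k N : ℕ) : ∑ j ∈ Finset.range (m + 1 + 1),
    (m + 1).choose j * (k ^ j * (j * N ^ (m + 1 - j))) = (m + 1) * k * (k + N) ^ m := by
  rw [Finset.sum_range_succ', add_pow, Finset.mul_sum]
  simp only [zero_mul, mul_zero, add_zero]
  refine Finset.sum_congr rfl fun j _ => ?_
  have := Nat.add_one_mul_choose_eq m j
  rw [Nat.add_sub_add_right, pow_succ]
  calc _ = ((m + 1).choose (j + 1) * (j + 1)) * (k * k ^ j * N ^ (m - j)) := by ring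
    _ = _ := by rw [← this, Nat.cast_id]; ring

theorem acycCount_formula (m : ℕ) : ∀ (α β : Type) [Fintype α] [Fintype β],
    Nat.card α = m → acycCount α β * (m + Nat.card β) = Nat.card β * (m + Nat.card β) ^ m := by
  classical
  induction m using Nat.strong_induction_on with
  | _ m ih =>
    intro α β _ _ hα
    rcases m with _ | m
    · have : IsEmpty α := by
        rw [Nat.card_eq_fintype_card] at hα; exact Fintype.card_eq_zero_iff.1 hα
      rw [acycCount_empty]; simp
    have : Nonempty α := by
      rw [← Fintype.card_pos_iff, ← Nat.card_eq_fintype_card]; omega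
    have key : (m + 1) * acycCount α β = (m + 1) * Nat.card β * (Nat.card β + (m + 1)) ^ m := by
      rw [acycCount_rec, ← binom_id, Finset.mul_sum]
      have step : ∀ J : Set α, (m + 1) * (Nat.card β ^ Nat.card J * acycCount ↥Jᶜ J) =
          Nat.card β ^ Nat.card J * (Nat.card J * (m + 1) ^ (m + 1 - Nat.card J)) := by
        intro J
        have hJ : Nat.card ↥Jᶜ + Nat.card J = m + 1 := by
          rw [← hα, ← Nat.card_sum]
          exact Nat.card_congr ((Equiv.sumComm _ _).trans (Equiv.Set.sumCompl J))
        by_cases h0 : Nat.card J = 0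
        · have : IsEmpty J := by
            rw [Nat.card_eq_fintype_card] at h0; exact Fintype.card_eq_zero_iff.1 h0
          have : Nonempty ↥Jᶜ := by
            rw [← Fintype.card_pos_iff, ← Nat.card_eq_fintype_card]; omega
          rw [acycCount_zero, h0]; simp
        · have := ih (Nat.card ↥Jᶜ) (by omega) ↥Jᶜ J rfl
          rw [hJ] at this
          have e : m + 1 - Nat.card J = Nat.card ↥Jᶜ := by omega
          rw [e, ← this]; ring
      rw [Finset.sum_congr rfl fun J _ => step J]
      rw [← Equiv.sum_comp (Fintype.finsetEquivSet (α := α))]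
      have hc : Fintype.card α = m + 1 := by rw [← hα, Nat.card_eq_fintype_card]
      have := Finset.sum_powerset_apply_card (x := (Finset.univ : Finset α))
        (fun j => Nat.card β ^ j * (j * (m + 1) ^ (m + 1 - j)))
      rw [Finset.card_univ, hc, Finset.powerset_univ] at this
      simp only [smul_eq_mul] at this
      rw [← this]
      refine Finset.sum_congr rfl fun J _ => ?_
      simp
    have key := Nat.eq_of_mul_eq_mul_left (Nat.succ_pos m) (key.trans (mul_assoc _ _ _))
    rw [key]; ring

/-- Graph of a parent function. -/
def pgraph {α : Type} (f : α → α ⊕ Unit) : SimpleGraph (α ⊕ Unit) :=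
  SimpleGraph.fromRel (fun x y => ∃ a, x = Sum.inl a ∧ y = f a)

theorem acyc_ne {α β : Type} {f : α → α ⊕ β} (hf : Acyc f) (a : α) : f a ≠ Sum.inl a :=
  fun h => hf.asymmetric a a h h

theorem pgraph_adj {α : Type} {f : α → α ⊕ Unit} (hf : Acyc f) (a : α) :
    (pgraph f).Adj (Sum.inl a) (f a) := by
  rw [pgraph, SimpleGraph.fromRel_adj]
  exact ⟨(acyc_ne hf a).symm, Or.inl ⟨a, rfl, rfl⟩⟩

theorem pgraph_connected {α : Type} {f : α → α ⊕ Unit} (hf : Acyc f) : (pgraph f).Connected := by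
  have h : ∀ a : α, (pgraph f).Reachable (Sum.inl a) (Sum.inr ()) := by
    intro a
    induction a using hf.induction with
    | _ a ih =>
      refine (pgraph_adj hf a).reachable.trans ?_
      rcases h : f a with x | x
      · exact ih x h
      · rfl
  rw [SimpleGraph.connected_iff_exists_forall_reachable]
  refine ⟨Sum.inr (), ?_⟩
  rintro (a | a)
  · exact (h a).symm
  · rfl

theorem pgraph_tree {α : Type} [Fintype α] {f : α → α ⊕ Unit} (hf : Acyc f) :
    (pgraph f).IsTree := by
  classical
  rw [SimpleGraph.isTree_iff_connected_and_card]
  refine ⟨pgraph_connected hf, le_antisymm ?_ (pgraph_connected hf).card_vert_le_card_edgeSet_add_one⟩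
  have : Nat.card (pgraph f).edgeSet ≤ Nat.card α := by
    refine Nat.card_le_card_of_surjective
      (fun a => (⟨s(Sum.inl a, f a), pgraph_adj hf a⟩ : (pgraph f).edgeSet)) ?_
    rintro ⟨e, he⟩
    induction e using Sym2.ind with
    | _ x y =>
      have he' : (pgraph f).Adj x y := he
      rw [pgraph, SimpleGraph.fromRel_adj] at he'
      rcases he' with ⟨-, ⟨a, rfl, rfl⟩ | ⟨a, rfl, rfl⟩⟩
      · exact ⟨a, rfl⟩
      · exact ⟨a, Subtype.ext Sym2.eq_swap⟩
  simpa using this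

theorem pgraph_inj {α : Type} {f g : α → α ⊕ Unit} (hf : Acyc f)
    (h : pgraph f = pgraph g) : f = g := by
  funext a
  induction a using hf.induction with
  | _ a ih =>
    have := pgraph_adj hf a
    rw [h, pgraph, SimpleGraph.fromRel_adj] at this
    rcases this with ⟨-, ⟨b, hb, hb'⟩ | ⟨b, hb, hb'⟩⟩
    · rw [hb', Sum.inl_injective hb]
    · have := ih b hb
      rw [← hb'] at this
      exact absurd hb (hf.asymmetric _ _ this)

theorem pgraph_surj {α : Type} [Fintype α] (T : SimpleGraph (α ⊕ Unit)) (hT : T.IsTree) :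
    ∃ f, Acyc f ∧ pgraph f = T := by
  have h : ∀ a : α, ∃ y, T.Adj (Sum.inl a) y ∧
      T.dist y (Sum.inr ()) < T.dist (Sum.inl a) (Sum.inr ()) := by
    intro a
    obtain ⟨p, hp⟩ := hT.connected.exists_walk_length_eq_dist (Sum.inl a) (Sum.inr ())
    cases p with
    | cons h q =>
      refine ⟨_, h, ?_⟩
      rw [← hp, SimpleGraph.Walk.length_cons]
      exact Nat.lt_succ_of_le (SimpleGraph.dist_le q)
  choose f hf hd using h
  have hA : Acyc f := acyc_of_rank f (fun a => T.dist (Sum.inl a) (Sum.inr ())) (by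
    intro a b e
    have := hd a
    rwa [e] at this)
  refine ⟨f, hA, tree_le_eq (pgraph_tree hA) hT ?_⟩
  intro x y hxy
  rw [pgraph, SimpleGraph.fromRel_adj] at hxy
  rcases hxy with ⟨-, ⟨a, rfl, rfl⟩ | ⟨a, rfl, rfl⟩⟩
  · exact hf a
  · exact (hf a).symm

theorem card_trees_sum (α : Type) [Fintype α] :
    Nat.card {T : SimpleGraph (α ⊕ Unit) // T.IsTree} = acycCount α Unit := by
  symm
  refine Nat.card_congr (Equiv.ofBijective
    (fun f => (⟨pgraph f.1, pgraph_tree f.2⟩ : {T : SimpleGraph (α ⊕ Unit) // T.IsTree})) ⟨?_, ?_⟩)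
  · intro f g h
    exact Subtype.ext (pgraph_inj f.2 (congrArg Subtype.val h))
  · rintro ⟨T, hT⟩
    obtain ⟨f, hf, h⟩ := pgraph_surj T hT
    exact ⟨⟨f, hf⟩, Subtype.ext h⟩

theorem cayley (n : ℕ) (hn : 2 ≤ n) :
    Nat.card {T : SimpleGraph (Fin n) // T.IsTree} = n ^ (n - 2) := by
  obtain ⟨m, rfl⟩ : ∃ m, n = m + 2 := ⟨n - 2, by omega⟩
  have e : Fin (m + 2) ≃ Fin (m + 1) ⊕ Unit :=
    Fintype.equivOfCardEq (by simp)
  have h1 : Nat.card {T : SimpleGraph (Fin (m + 2)) // T.IsTree} =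
      Nat.card {T : SimpleGraph (Fin (m + 1) ⊕ Unit) // T.IsTree} :=
    Nat.card_congr (Equiv.subtypeEquiv e.simpleGraph fun T =>
      SimpleGraph.Iso.isTree_iff (SimpleGraph.Iso.comap e.symm T).symm)
  rw [h1, card_trees_sum]
  have := acycCount_formula (m + 1) (Fin (m + 1)) Unit (by simp)
  simp only [Nat.card_unique, one_mul] at this
  rw [pow_succ] at this
  exact Nat.eq_of_mul_eq_mul_right (by omega) this

end Cayley

/-- The minimal primes over the ideal of cycle monomials correspond bijectively, via
`T ↦ P_T`, to trees on the vertex set `[n]`; in particular there are `n^{n-2}` of them. -/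
theorem minimal_primes_of_cycle_ideal_are_trees
    (K : Type) [Field K] (n : ℕ) (hn : 2 ≤ n) :
    (∀ T : SimpleGraph (Fin n), T.IsTree → treePrime K n T ∈ (cycleIdeal K n).minimalPrimes) ∧
    (∀ T T' : SimpleGraph (Fin n), T.IsTree → T'.IsTree →
      treePrime K n T = treePrime K n T' → T = T') ∧
    (∀ P ∈ (cycleIdeal K n).minimalPrimes,
      ∃ T : SimpleGraph (Fin n), T.IsTree ∧ treePrime K n T = P) ∧
    Nat.card {P : Ideal (MvPolynomial (Sym2 (Fin n)) K) //
        P ∈ (cycleIdeal K n).minimalPrimes} = n ^ (n - 2) := by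
  refine ⟨part1 hn, fun T T' _ _ h => part2 T T' h, part3 hn, ?_⟩
  rw [← cayley n hn]
  symm
  refine Nat.card_congr (Equiv.ofBijective
    (fun T => (⟨treePrime K n T.1, part1 hn T.1 T.2⟩ :
      {P : Ideal (MvPolynomial (Sym2 (Fin n)) K) // P ∈ (cycleIdeal K n).minimalPrimes})) ⟨?_, ?_⟩)
  · intro T S h
    exact Subtype.ext (part2 _ _ (congrArg Subtype.val h))
  · rintro ⟨P, hP⟩
    obtain ⟨T, hT, h⟩ := part3 hn P hP
    exact ⟨⟨T, hT⟩, Subtype.ext h⟩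
end

section
/- For every n ∈ ℕ, the number of orbits of Sym([n]), acting by simultaneous row and column permutations (π·A)(i,j) = A(π⁻¹(i),π⁻¹(j)), on the set of symmetric n×n matrices over ℚ all of whose entries lie in {0,1} and whose rank equals exactly 2, is 2·⌊n/2⌋·⌈n/2⌉ + n(n−1)/2. -/
def MM : Fin 3 → Matrix (Fin 3) (Fin 3) ℚ :=
  ![!![1,0,0;0,1,0;0,0,0], !![0,1,0;1,0,0;0,0,0], !![1,1,0;1,0,0;0,0,0]]

lemma MM_rank_le (t : Fin 3) : (MM t).rank ≤ 2 := by
  have h : MM t = (MM t).submatrix id (Fin.castSucc : Fin 2 → Fin 3) *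
      (!![1,0,0;0,1,0] : Matrix (Fin 2) (Fin 3) ℚ) := by
    ext i j
    fin_cases t <;> fin_cases i <;> fin_cases j <;>
      simp [MM, Matrix.mul_apply, Fin.sum_univ_two]
  rw [h]
  exact (Matrix.rank_mul_le_left _ _).trans (Matrix.rank_le_card_width _)

lemma mat_rank {n : ℕ} (t : Fin 3) (f : Fin n → Fin 3) (i j : Fin n) (hi : f i = 0)
    (hj : f j = 1) : ((MM t).submatrix f f).rank = 2 := by
  apply le_antisymm ((Matrix.rank_submatrix_le _ _ _).trans (MM_rank_le t))
  have h : (((MM t).submatrix f f).submatrix ![i,j] ![i,j]).rank = 2 := by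
    rw [Matrix.rank_of_isUnit]
    · simp
    · rw [Matrix.isUnit_iff_isUnit_det, Matrix.det_fin_two, isUnit_iff_ne_zero]
      simp only [Matrix.submatrix_apply, Matrix.cons_val_zero, Matrix.cons_val_one, hi, hj]
      fin_cases t <;> simp [MM]
  rw [← h]
  exact Matrix.rank_submatrix_le _ _ _

lemma MM_prop (t c d : Fin 3) : MM t c d = MM t d c ∧ (MM t c d = 0 ∨ MM t c d = 1) := by
  fin_cases t <;> fin_cases c <;> fin_cases d <;> simp [MM]

lemma rank_two_basis {n : ℕ} (A : Matrix (Fin n) (Fin n) ℚ) (h : A.rank = 2) :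
    ∃ i j, (∀ u v : ℚ, (∀ l, u * A i l + v * A j l = 0) → u = 0 ∧ v = 0) ∧
      ∀ k, ∃ a b : ℚ, ∀ l, A k l = a * A i l + b * A j l := by
  have hr := Matrix.rank_eq_finrank_span_row A
  obtain ⟨f, h1, h2, h3⟩ := Submodule.exists_fun_fin_finrank_span_eq ℚ (Set.range A.row)
  rw [h] at hr
  revert f
  rw [← hr]
  intro f h1 h2 h3
  obtain ⟨i, hi⟩ := h1 0
  obtain ⟨j, hj⟩ := h1 1
  have hf : f = ![A.row i, A.row j] := by
    ext x; fin_cases x <;> simp [hi, hj]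
  subst hf
  refine ⟨i, j, ?_, ?_⟩
  · intro u v huv
    rw [LinearIndependent.pair_iff] at h3
    apply h3
    ext l
    simpa using huv l
  · intro k
    have : A.row k ∈ Submodule.span ℚ (Set.range A.row) := Submodule.subset_span ⟨k, rfl⟩
    rw [← h2, Matrix.range_cons, Matrix.range_cons, Matrix.range_empty, Set.union_empty,
      Set.singleton_union, Submodule.mem_span_pair] at this
    obtain ⟨a, b, hab⟩ := this
    refine ⟨a, b, fun l => ?_⟩
    have := congrFun hab l
    simpa using this.symm

lemma classify {n : ℕ} (A : Matrix (Fin n) (Fin n) ℚ) (hs : A.IsSymm)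
    (h01 : ∀ i j, A i j = 0 ∨ A i j = 1) (hr : A.rank = 2) :
    ∃ (t : Fin 3) (f : Fin n → Fin 3) (i j : Fin n), f i = 0 ∧ f j = 1 ∧
      A = (MM t).submatrix f f := by
  obtain ⟨i, j, hli, hsp⟩ := rank_two_basis A hr
  choose a b hab using hsp
  have hs' : ∀ x y, A x y = A y x := fun x y => hs.apply y x
  have hdet : A i i * A j j - A i j * A i j ≠ 0 := by
    intro h0
    have key : ∀ u v : ℚ, u * A i i + v * A i j = 0 → u * A i j + v * A j j = 0 →
        u = 0 ∧ v = 0 := by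
      intro u v e1 e2
      apply hli
      intro l
      rw [hs' i l, hs' j l, hab l i, hab l j, hs' j i]
      linear_combination a l * e1 + b l * e2
    have k1 := key (A j j) (-A i j) (by linarith) (by ring)
    have k2 := key (A i j) (-A i i) (by ring) (by linarith)
    have := key 1 0 (by linarith [k1.1, k2.2]) (by linarith [k1.2])
    exact one_ne_zero this.1
  have main : ∀ (t : Fin 3) (i j : Fin n) (a b : Fin n → ℚ),
      (∀ k l, A k l = a k * A i l + b k * A j l) →
      A i i = MM t 0 0 → A i j = MM t 0 1 → A j j = MM t 1 1 →
      ∃ (t : Fin 3) (f : Fin n → Fin 3) (i j : Fin n), f i = 0 ∧ f j = 1 ∧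
      A = (MM t).submatrix f f := by
    clear hdet hab hli a b i j
    intro t i j a b hab hii hij hjj
    have hki : ∀ k, A k i = a k * MM t 0 0 + b k * MM t 0 1 := by
      intro k; rw [hab k i, hii, hs' j i, hij]
    have hkj : ∀ k, A k j = a k * MM t 0 1 + b k * MM t 1 1 := by
      intro k; rw [hab k j, hjj, hij]
    have hA : ∀ k l, A k l = a k * (a l * MM t 0 0 + b l * MM t 0 1)
        + b k * (a l * MM t 0 1 + b l * MM t 1 1) := by
      intro k l
      rw [hab k l, hs' i l, hs' j l, hki, hkj]
    have hv : ∀ k, (a k = 1 ∧ b k = 0) ∨ (a k = 0 ∧ b k = 1) ∨ (a k = 0 ∧ b k = 0) := by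
      intro k
      have e1 := hki k
      have e2 := hkj k
      have e3 := hA k k
      have o1 := h01 k i
      have o2 := h01 k j
      have o3 := h01 k k
      rw [e1] at o1
      rw [e2] at o2
      rw [e3] at o3
      clear e1 e2 e3 hA hki hkj hii hij hjj
      generalize a k = x at *
      generalize b k = y at *
      fin_cases t <;> simp [MM] at o1 o2 o3 ⊢
      · rcases o1 with rfl | rfl <;> rcases o2 with rfl | rfl <;>
          first | (norm_num; done) | (exfalso; norm_num at o3; done)
      · rcases o1 with rfl | rfl <;> rcases o2 with rfl | rfl <;>
          first | (norm_num; done) | (exfalso; norm_num at o3; done)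
      · rcases o2 with rfl | rfl
        · norm_num at o1 o3 ⊢
          tauto
        · rcases o1 with o1 | o1
          · obtain rfl : y = -1 := by linarith
            norm_num at o3
          · obtain rfl : y = 0 := by linarith
            norm_num
    have hi0 : a i = 1 ∧ b i = 0 := by
      have e1 := hki i
      have e2 := hkj i
      rw [hii] at e1
      rw [hij] at e2
      revert e1 e2
      rcases hv i with ⟨h1, h2⟩ | ⟨h1, h2⟩ | ⟨h1, h2⟩ <;> rw [h1, h2] <;>
        fin_cases t <;> norm_num [MM]
    have hj0 : a j = 0 ∧ b j = 1 := by
      have e1 := hki j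
      have e2 := hkj j
      rw [hs' j i, hij] at e1
      rw [hjj] at e2
      revert e1 e2
      rcases hv j with ⟨h1, h2⟩ | ⟨h1, h2⟩ | ⟨h1, h2⟩ <;> rw [h1, h2] <;>
        fin_cases t <;> norm_num [MM]
    refine ⟨t, fun k => if a k = 1 then 0 else if b k = 1 then 1 else 2, i, j, ?_, ?_, ?_⟩
    · simp [hi0]
    · simp [hj0]
    · ext k l
      rw [hA k l, Matrix.submatrix_apply]
      rcases hv k with ⟨h1, h2⟩ | ⟨h1, h2⟩ | ⟨h1, h2⟩ <;>
      rcases hv l with ⟨h3, h4⟩ | ⟨h3, h4⟩ | ⟨h3, h4⟩ <;>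
      rw [h1, h2, h3, h4] <;> fin_cases t <;> simp [MM]
  rcases h01 i i with h1 | h1 <;> rcases h01 i j with h2 | h2 <;> rcases h01 j j with h3 | h3 <;>
    rw [h1, h2, h3] at hdet <;> norm_num at hdet
  · exact main 1 i j a b hab (by simp [MM, h1]) (by simp [MM, h2]) (by simp [MM, h3])
  · exact main 2 j i b a (fun k l => by rw [hab k l]; ring)
      (by simp [MM, h3]) (by simp [MM, h2, hs' j i]) (by simp [MM, h1])
  · exact main 0 i j a b hab (by simp [MM, h1]) (by simp [MM, h2]) (by simp [MM, h3])
  · exact main 2 i j a b hab (by simp [MM, h1]) (by simp [MM, h2]) (by simp [MM, h3])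

lemma exists_perm {n : ℕ} (f g : Fin n → Fin 3)
    (h0 : (Finset.univ.filter (fun i => f i = 0)).card = (Finset.univ.filter (fun i => g i = 0)).card)
    (h1 : (Finset.univ.filter (fun i => f i = 1)).card = (Finset.univ.filter (fun i => g i = 1)).card) :
    ∃ π : Equiv.Perm (Fin n), ∀ i, g (π i) = f i := by
  have tot : ∀ f : Fin n → Fin 3, (Finset.univ.filter (fun i => f i = 0)).card +
    (Finset.univ.filter (fun i => f i = 1)).card + (Finset.univ.filter (fun i => f i = 2)).card = n := by
    intro f
    have := Finset.card_eq_sum_card_fiberwise (f := f) (s := Finset.univ) (t := Finset.univ) (by simp)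
    simp only [Fin.sum_univ_three, Finset.card_univ, Fintype.card_fin] at this
    exact this.symm
  have hc : ∀ c, (Finset.univ.filter (fun i => f i = c)).card = (Finset.univ.filter (fun i => g i = c)).card := by
    intro c
    have := tot f
    have := tot g
    fin_cases c
    · exact h0
    · exact h1
    · simp only [Fin.reduceFinMk]; omega
  have he : ∀ c, Nonempty ({a // f a = c} ≃ {b // g b = c}) := by
    intro c
    apply Fintype.card_eq.mp
    rw [Fintype.card_subtype, Fintype.card_subtype]
    exact hc c
  let e := fun c => (he c).some
  exact ⟨Equiv.ofFiberEquiv e, fun i => Equiv.ofFiberEquiv_map e i⟩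

def canon (n a s : ℕ) : Fin n → Fin 3 := fun i => if i.1 < a then 0 else if i.1 < s then 1 else 2

lemma canon_card0 (n a s : ℕ) (h : a ≤ s) (hs : s ≤ n) :
    (Finset.univ.filter (fun i => canon n a s i = 0)).card = a := by
  have : (Finset.univ.filter (fun i => canon n a s i = 0)) = Finset.univ.filter (fun i : Fin n => i.1 < a) := by
    ext i; simp [canon]; split_ifs <;> simp_all
  rw [this, Fin.card_filter_val_lt]; omega

lemma canon_card1 (n a s : ℕ) (h : a ≤ s) (hs : s ≤ n) :
    (Finset.univ.filter (fun i => canon n a s i = 1)).card = s - a := by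
  have h2 : (Finset.univ.filter (fun i : Fin n => i.1 < s)) =
    (Finset.univ.filter (fun i => canon n a s i = 0)) ∪ (Finset.univ.filter (fun i => canon n a s i = 1)) := by
    ext i
    simp only [Finset.mem_filter, Finset.mem_univ, true_and, Finset.mem_union]
    unfold canon
    split_ifs <;> simp_all <;> omega
  have h3 := congrArg Finset.card h2
  rw [Finset.card_union_of_disjoint, canon_card0 n a s h hs, Fin.card_filter_val_lt] at h3
  · omega
  · rw [Finset.disjoint_filter]; intro i _ h; simp [h]

lemma sum_comp3 {n : ℕ} (f : Fin n → Fin 3) (F : Fin 3 → ℚ) : ∑ i, F (f i) =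
   (Finset.univ.filter (fun i => f i = 0)).card * F 0 + (Finset.univ.filter (fun i => f i = 1)).card * F 1
   + (Finset.univ.filter (fun i => f i = 2)).card * F 2 := by
  rw [← Finset.sum_fiberwise' Finset.univ f F, Fin.sum_univ_three]
  simp

noncomputable def inv3 {n : ℕ} (A : Matrix (Fin n) (Fin n) ℚ) : ℚ × ℕ × ℚ :=
  (∑ i, A i i, Nat.card {i // ∃ j, A i j ≠ 0}, ∑ i, ∑ j, A i j)

lemma inv3_perm {n : ℕ} (A : Matrix (Fin n) (Fin n) ℚ) (π : Equiv.Perm (Fin n)) :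
    inv3 (fun i j => A (π i) (π j)) = inv3 A := by
  unfold inv3
  refine Prod.ext ?_ (Prod.ext ?_ ?_)
  · exact Equiv.sum_comp π (fun i => A i i)
  · apply Nat.card_congr
    refine Equiv.subtypeEquiv π ?_
    intro i
    exact ⟨fun ⟨j, h⟩ => ⟨π j, h⟩, fun ⟨j, h⟩ => ⟨π.symm j, by simpa using h⟩⟩
  · simp only
    rw [← Equiv.sum_comp π (fun i => ∑ j, A i j)]
    refine Finset.sum_congr rfl fun i _ => ?_
    exact Equiv.sum_comp π (fun j => A (π i) j)

lemma inv3_mat {n : ℕ} (t : Fin 3) (a s : ℕ) (h0 : 0 < a) (h : a < s) (hs : s ≤ n) :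
    inv3 ((MM t).submatrix (canon n a s) (canon n a s)) =
      ((![(s : ℚ), 0, a] : Fin 3 → ℚ) t, s,
       (![(a : ℚ)^2 + (s - a)^2, 2 * a * (s - a), a ^ 2 + 2 * a * (s - a)] : Fin 3 → ℚ) t) := by
  have c0 := canon_card0 n a s h.le hs
  have c1 := canon_card1 n a s h.le hs
  have cs : ((s - a : ℕ) : ℚ) = s - a := by push_cast [h.le]; ring
  unfold inv3
  refine Prod.ext ?_ (Prod.ext ?_ ?_)
  · simp only [Matrix.submatrix_apply]
    rw [sum_comp3 (canon n a s) (fun c => MM t c c), c0, c1, cs]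
    fin_cases t <;> simp [MM]
  · simp only [Matrix.submatrix_apply]
    have hz : ∀ i : Fin n, (∃ j, MM t (canon n a s i) (canon n a s j) ≠ 0) ↔ i.1 < s := by
      intro i
      have v0 : canon n a s ⟨0, by omega⟩ = 0 := by simp [canon, h0]
      have v1 : canon n a s ⟨a, by omega⟩ = 1 := by simp [canon, h]
      constructor
      · rintro ⟨j, hj⟩
        by_contra hc
        have : canon n a s i = 2 := by
          unfold canon; rw [if_neg (by omega), if_neg hc]
        rw [this] at hj
        apply hj
        generalize canon n a s j = d
        fin_cases t <;> fin_cases d <;> simp [MM]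
      · intro hi
        have : canon n a s i = 0 ∨ canon n a s i = 1 := by
          unfold canon; split_ifs <;> simp
        by_contra! hc
        have e0 := hc ⟨0, by omega⟩
        have e1 := hc ⟨a, by omega⟩
        rw [v0] at e0
        rw [v1] at e1
        rcases this with h | h <;> rw [h] at e0 e1 <;> revert e0 e1 <;>
          fin_cases t <;> simp [MM]
    simp only [hz]
    rw [Nat.card_eq_fintype_card, Fintype.card_subtype, Fin.card_filter_val_lt]
    omega
  · simp only [Matrix.submatrix_apply]
    have : ∀ i, ∑ j, MM t (canon n a s i) (canon n a s j) = (fun c => a * MM t c 0 + (s - a) * MM t c 1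
        + ((Finset.univ.filter (fun i => canon n a s i = 2)).card : ℚ) * MM t c 2) (canon n a s i) := by
      intro i
      rw [sum_comp3 (canon n a s) (fun c => MM t (canon n a s i) c), c0, c1, cs]
    rw [Finset.sum_congr rfl fun i _ => this i]
    refine (sum_comp3 (canon n a s) (fun c => a * MM t c 0 + (s - a) * MM t c 1
        + ((Finset.univ.filter (fun i => canon n a s i = 2)).card : ℚ) * MM t c 2)).trans ?_
    rw [c0, c1, cs]
    fin_cases t <;> simp [MM] <;> ring

def idx (n : ℕ) : Finset (Σ _ : Fin 3, Σ _ : ℕ, ℕ) :=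
  Finset.univ.sigma fun t => (Finset.range (n+1)).sigma fun s =>
    if t = 2 then Finset.Ico 1 s else Finset.Ico 1 (s/2+1)

lemma idx_card (n : ℕ) : (idx n).card = 2 * (n / 2) * ((n + 1) / 2) + n * (n - 1) / 2 := by
  simp only [idx, Finset.card_sigma, Fin.sum_univ_three]
  have h1 : ∀ n, ∑ s ∈ Finset.range (n+1), s/2 = (n/2) * ((n+1)/2) := by
    intro n
    induction n with
    | zero => simp
    | succ n ih =>
      rw [Finset.sum_range_succ, ih]
      obtain ⟨k, rfl | rfl⟩ : ∃ k, n = 2*k ∨ n = 2*k+1 := ⟨n/2, by omega⟩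
      · rw [show (2*k+1)/2 = k by omega, show (2*k)/2 = k by omega, show (2*k+1+1)/2 = k+1 by omega]
        ring
      · rw [show (2*k+1)/2 = k by omega, show (2*k+1+1+1)/2 = k+1 by omega, show (2*k+1+1)/2 = k+1 by omega]
        ring
  have h2 : ∀ n, ∑ s ∈ Finset.range (n+1), (s-1) = n * (n-1) / 2 := by
    intro n
    rw [Finset.sum_range_succ', ← Finset.sum_range_id]
    simp
  simp [h1, h2]
  ring

lemma idx_mem {n : ℕ} {t : Fin 3} {s a : ℕ} : (⟨t, s, a⟩ : Σ _ : Fin 3, Σ _ : ℕ, ℕ) ∈ idx n ↔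
    s ≤ n ∧ 0 < a ∧ a < s ∧ (t ≠ 2 → 2 * a ≤ s) := by
  simp only [idx, Finset.mem_sigma, Finset.mem_univ, Finset.mem_range, true_and]
  split_ifs with h <;> simp [h] <;> omega

lemma MM_swap (t : Fin 3) (ht : t ≠ 2) (c d : Fin 3) :
    MM t (Equiv.swap 0 1 c) (Equiv.swap 0 1 d) = MM t c d := by
  have h0 : Equiv.swap (0 : Fin 3) 1 0 = 1 := by decide
  have h1 : Equiv.swap (0 : Fin 3) 1 1 = 0 := by decide
  have h2 : Equiv.swap (0 : Fin 3) 1 2 = 2 := by decide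
  fin_cases t
  · fin_cases c <;> fin_cases d <;> simp [MM, h0, h1, h2]
  · fin_cases c <;> fin_cases d <;> simp [MM, h0, h1, h2]
  · exact absurd rfl ht

lemma classify2 {n : ℕ} (A : Matrix (Fin n) (Fin n) ℚ) (hs : A.IsSymm)
    (h01 : ∀ i j, A i j = 0 ∨ A i j = 1) (hr : A.rank = 2) :
    ∃ (t : Fin 3) (f : Fin n → Fin 3), A = (MM t).submatrix f f ∧
      0 < (Finset.univ.filter (fun i => f i = 0)).card ∧
      0 < (Finset.univ.filter (fun i => f i = 1)).card ∧
      (t ≠ 2 → (Finset.univ.filter (fun i => f i = 0)).card ≤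
        (Finset.univ.filter (fun i => f i = 1)).card) := by
  obtain ⟨t, f, i, j, hi, hj, hA⟩ := classify A hs h01 hr
  have p0 : 0 < (Finset.univ.filter (fun i => f i = 0)).card := Finset.card_pos.2 ⟨i, by simp [hi]⟩
  have p1 : 0 < (Finset.univ.filter (fun i => f i = 1)).card := Finset.card_pos.2 ⟨j, by simp [hj]⟩
  by_cases h : t ≠ 2 → (Finset.univ.filter (fun i => f i = 0)).card ≤
        (Finset.univ.filter (fun i => f i = 1)).card
  · exact ⟨t, f, hA, p0, p1, h⟩
  · push Not at h
    have q0 : ∀ c : Fin 3, Equiv.swap 0 1 c = 0 ↔ c = 1 := by decide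
    have q1 : ∀ c : Fin 3, Equiv.swap 0 1 c = 1 ↔ c = 0 := by decide
    refine ⟨t, fun i => Equiv.swap 0 1 (f i), ?_, ?_, ?_, ?_⟩
    · rw [hA]; ext k l
      simp only [Matrix.submatrix_apply, MM_swap t h.1]
    · simpa only [q0] using p1
    · simpa only [q1] using p0
    · simp only [q0, q1]; intro _; exact h.2.le

lemma canon_spec {n : ℕ} {t : Fin 3} {s a : ℕ}
    (h : (⟨t, s, a⟩ : Σ _ : Fin 3, Σ _ : ℕ, ℕ) ∈ idx n) :
    ((MM t).submatrix (canon n a s) (canon n a s)).IsSymm ∧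
    (∀ i j, (MM t).submatrix (canon n a s) (canon n a s) i j = 0 ∨
      (MM t).submatrix (canon n a s) (canon n a s) i j = 1) ∧
    ((MM t).submatrix (canon n a s) (canon n a s)).rank = 2 := by
  obtain ⟨h1, h2, h3, -⟩ := idx_mem.1 h
  refine ⟨?_, fun i j => (MM_prop _ _ _).2, ?_⟩
  · ext i j
    exact (MM_prop _ _ _).1
  · exact mat_rank t _ ⟨0, by omega⟩ ⟨a, by omega⟩ (by simp [canon, h2]) (by simp [canon, h3])

lemma inv3_index_inj {n : ℕ} {t t' : Fin 3} {s a s' a' : ℕ}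
    (h : (⟨t, s, a⟩ : Σ _ : Fin 3, Σ _ : ℕ, ℕ) ∈ idx n)
    (h' : (⟨t', s', a'⟩ : Σ _ : Fin 3, Σ _ : ℕ, ℕ) ∈ idx n)
    (e : inv3 ((MM t).submatrix (canon n a s) (canon n a s)) =
      inv3 ((MM t').submatrix (canon n a' s') (canon n a' s'))) :
    t = t' ∧ s = s' ∧ a = a' := by
  obtain ⟨h1, h2, h3, h4⟩ := idx_mem.1 h
  obtain ⟨h1', h2', h3', h4'⟩ := idx_mem.1 h'
  rw [inv3_mat t a s h2 h3 h1, inv3_mat t' a' s' h2' h3' h1'] at e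
  simp only [Prod.mk.injEq] at e
  obtain ⟨e1, rfl, e3⟩ := e
  have fin : 2 * a ≤ s → 2 * a' ≤ s → ((a : ℚ) - a') * (a + a' - s) = 0 → a = a' := by
    intro u v w
    rcases mul_eq_zero.1 w with w | w
    · have : (a : ℚ) = a' := by linarith
      exact_mod_cast this
    · have : (a : ℚ) + a' = s := by linarith
      have : a + a' = s := by exact_mod_cast this
      omega
  clear h h'
  fin_cases t <;> fin_cases t' <;> simp at e1 e3 h4 h4' ⊢ <;> first
    | omega
    | (have e1' := e1.symm; norm_cast at e1 e1'; omega)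
    | skip
  · exact fin h4 h4' (by linarith)
  · exact fin h4 h4' (by linarith)

/-- The number of orbits of `Sym([n])`, acting by simultaneous row and column
permutations, on symmetric `n × n` matrices over `ℚ` with entries in `{0,1}` and rank
exactly `2`, equals `2·⌊n/2⌋·⌈n/2⌉ + n(n-1)/2`. -/
theorem orbit_count_symmetric_zero_one_rank_two_matrices (n : ℕ) :
    Nat.card (Quot (fun (A B : {A : Matrix (Fin n) (Fin n) ℚ //
        A.IsSymm ∧ (∀ i j, A i j = 0 ∨ A i j = 1) ∧ A.rank = 2}) =>
      ∃ π : Equiv.Perm (Fin n), (fun i j => A.1 (π⁻¹ i) (π⁻¹ j)) = B.1))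
    = 2 * (n / 2) * ((n + 1) / 2) + n * (n - 1) / 2 := by
  rw [← idx_card n, ← Fintype.card_coe, ← Nat.card_eq_fintype_card]
  symm
  refine Nat.card_congr (Equiv.ofBijective
    (fun x => Quot.mk _ ⟨(MM x.1.1).submatrix (canon n x.1.2.2 x.1.2.1) (canon n x.1.2.2 x.1.2.1),
      canon_spec x.2⟩) ⟨?_, ?_⟩)
  · rintro ⟨⟨t, s, a⟩, h⟩ ⟨⟨t', s', a'⟩, h'⟩ e
    have e2 := congrArg (Quot.lift (fun A => inv3 A.1) (by
      rintro A B ⟨π, hπ⟩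
      show inv3 A.1 = inv3 B.1
      rw [← hπ]
      exact (inv3_perm A.1 π⁻¹).symm)) e
    obtain ⟨rfl, rfl, rfl⟩ := inv3_index_inj h h' e2
    rfl
  · intro q
    obtain ⟨⟨A, hs, h01, hr⟩, rfl⟩ := Quot.exists_rep q
    obtain ⟨t, f, hA, p0, p1, hle⟩ := classify2 A hs h01 hr
    have hn : (Finset.univ.filter (fun i => f i = 0)).card +
        (Finset.univ.filter (fun i => f i = 1)).card ≤ n := by
      rw [← Finset.card_union_of_disjoint]
      · exact (Finset.card_le_univ _).trans (by simp)
      · rw [Finset.disjoint_filter]; intro i _ h; simp [h]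
    generalize ha : (Finset.univ.filter (fun i => f i = 0)).card = a at *
    generalize hb : (Finset.univ.filter (fun i => f i = 1)).card = b at *
    refine ⟨⟨⟨t, a + b, a⟩, idx_mem.2 ⟨hn, p0, by omega, fun h => by have := hle h; omega⟩⟩, ?_⟩
    apply Quot.sound
    obtain ⟨π, hπ⟩ := exists_perm f (canon n a (a + b))
      (by rw [ha, canon_card0 _ _ _ (by omega) hn])
      (by rw [hb, canon_card1 _ _ _ (by omega) hn]; omega)
    refine ⟨π⁻¹, ?_⟩
    ext i j
    simp [hA, hπ]
end
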